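/- arXiv:1408.5659 — 2 statements merged into one kernel-verified Lean document; each statement's English description precedes it below -/
import Mathlib

section
/- Let α, β ≥ 0 with (α, β) ≠ (0, 0). Then there exist constants c₁, c₂ > 0, depending only on α, β, such that for all 0 < δ < 1/4: c₁·δ²·|ln δ| ≤ sup_{f ∈ B_∞^{α,β} ∩ M²} ω_φ²(f, δ)_{w_{α,β}, 1} ≤ c₂·δ²·|ln δ|. -/
open MeasureTheory Set Filter
open scoped ENNReal

noncomputable section

/-- The Jacobi weight `w_{α,β}(x) = (1+x)^α (1-x)^β`. -/
def jacobi (α β : ℝ) (x : ℝ) : ℝ := (1 + x) ^ α * (1 - x) ^ β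

/-- `φ(x) = √(1-x²)`. -/
def phiW (x : ℝ) : ℝ := Real.sqrt (1 - x ^ 2)

/-- The `L^p` norm of `g` on the interval `[a,b]` (essential sup when `p = ∞`). -/
def LpOn (g : ℝ → ℝ) (p : ℝ≥0∞) (a b : ℝ) : ℝ≥0∞ :=
  eLpNorm g p (volume.restrict (Icc a b))

/-- The `k`-th symmetric difference `Δ_h^k(f,x)` relative to `[-1,1]`. -/
def symmDelta (k : ℕ) (h : ℝ) (f : ℝ → ℝ) (x : ℝ) : ℝ :=
  if (x - k * h / 2 ∈ Icc (-1 : ℝ) 1 ∧ x + k * h / 2 ∈ Icc (-1 : ℝ) 1) then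
    ∑ i ∈ Finset.range (k + 1), ((k.choose i : ℝ) * (-1 : ℝ) ^ (k - i) * f (x - k * h / 2 + i * h))
  else 0

/-- Main-part weighted modulus `Ω_φ^k(f,δ)_{w,p}`. -/
def OmegaMain (k : ℕ) (f : ℝ → ℝ) (δ : ℝ) (wt : ℝ → ℝ) (p : ℝ≥0∞) : ℝ≥0∞ :=
  ⨆ h ∈ Ioc (0 : ℝ) δ,
    LpOn (fun x => wt x * symmDelta k (h * phiW x) f x) p
      (-1 + 2 * (k : ℝ) ^ 2 * h ^ 2) (1 - 2 * (k : ℝ) ^ 2 * h ^ 2)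

/-- Forward part `Ω→_φ^k(f,δ)_{w,p}`. -/
def OmegaFwd (k : ℕ) (f : ℝ → ℝ) (δ : ℝ) (wt : ℝ → ℝ) (p : ℝ≥0∞) : ℝ≥0∞ :=
  ⨆ h ∈ Ioc (0 : ℝ) (2 * (k : ℝ) ^ 2 * δ ^ 2),
    LpOn (fun x => wt x * symmDelta k h f (x + k * h / 2)) p
      (-1) (-1 + 2 * (k : ℝ) ^ 2 * δ ^ 2)

/-- Backward part `Ω←_φ^k(f,δ)_{w,p}`. -/
def OmegaBwd (k : ℕ) (f : ℝ → ℝ) (δ : ℝ) (wt : ℝ → ℝ) (p : ℝ≥0∞) : ℝ≥0∞ :=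
  ⨆ h ∈ Ioc (0 : ℝ) (2 * (k : ℝ) ^ 2 * δ ^ 2),
    LpOn (fun x => wt x * symmDelta k h f (x - k * h / 2)) p
      (1 - 2 * (k : ℝ) ^ 2 * δ ^ 2) 1

/-- Weighted Ditzian–Totik modulus `ω_φ^k(f,δ)_{w,p}`. -/
def omegaDT (k : ℕ) (f : ℝ → ℝ) (δ : ℝ) (wt : ℝ → ℝ) (p : ℝ≥0∞) : ℝ≥0∞ :=
  OmegaMain k f δ wt p + OmegaFwd k f δ wt p + OmegaBwd k f δ wt p

/-- `f` is `k`-monotone on `(-1,1)`: all `k`-th divided differences over `k+1` distinct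
points of `(-1,1)` are nonnegative. -/
def kMonotoneOn (k : ℕ) (f : ℝ → ℝ) : Prop :=
  ∀ x : Fin (k + 1) → ℝ, Function.Injective x → (∀ i, x i ∈ Ioo (-1 : ℝ) 1) →
    0 ≤ ∑ i, f (x i) / ∏ j ∈ Finset.univ.erase i, (x i - x j)

/-- `M^k`, the class of `k`-monotone functions on `(-1,1)`. -/
def MSet (k : ℕ) : Set (ℝ → ℝ) := {f | kMonotoneOn k f}

/-- `M_+^k`, the `k`-monotone functions on `(-1,1)` vanishing on `(-1,0]`. -/
def MPlus (k : ℕ) : Set (ℝ → ℝ) :=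
  {f | kMonotoneOn k f ∧ ∀ x : ℝ, -1 < x → x ≤ 0 → f x = 0}

/-- `J_p = (-1/p, ∞)` for finite `p`, `[0,∞)` for `p = ∞`. -/
def Jset (p : ℝ≥0∞) : Set ℝ := if p = ∞ then Ici 0 else Ioi (-1 / p.toReal)

/-- `W_p^{α,β}`. -/
def WSet (p : ℝ≥0∞) (α β : ℝ) : Set (ℝ → ℝ) :=
  {f | Measurable f ∧ LpOn (fun x => jacobi α β x * f x) p (-1) 1 ≠ ⊤}

/-- `B_p^{α,β}`, the unit sphere of `W_p^{α,β}`. -/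
def BSet (p : ℝ≥0∞) (α β : ℝ) : Set (ℝ → ℝ) :=
  {f | Measurable f ∧ LpOn (fun x => jacobi α β x * f x) p (-1) 1 = 1}

/-- Best weighted approximation `E_n(f)_{w,q}` by polynomials of degree at most `n`. -/
def En (n : ℕ) (f : ℝ → ℝ) (wt : ℝ → ℝ) (q : ℝ≥0∞) : ℝ≥0∞ :=
  ⨅ P ∈ {P : Polynomial ℝ | P.natDegree ≤ n},
    LpOn (fun x => wt x * (f x - P.eval x)) q (-1) 1

/-- `E(X, P_n)_{w,q}`. -/
def EClass (X : Set (ℝ → ℝ)) (n : ℕ) (wt : ℝ → ℝ) (q : ℝ≥0∞) : ℝ≥0∞ :=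
  ⨆ f ∈ X, En n f wt q

/-!
Near an endpoint, say `-1`, split `[-1 + 8h², 0]` into geometric blocks `1 + x ∈ [3d/4, d]`.
On such a block `w |f| ≤ 1` makes the convex function `f` Lipschitz with constant of order
`(w d)⁻¹`, and the integral of a second difference of step `u ∼ h √d` of a convex function is at
most a constant times `u²` times its Lipschitz constant. Hence every block contributes at most a
constant times `h²`, and there are of order `|log h|` of them. The forward and backward parts live
on intervals of length `8δ²`, where the weighted second difference is bounded, so they are of order
`δ²`. Conversely, the weighted second difference of `(1 + x)^(-α)` with step `δ φ(x)` is at least a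
constant times `δ² / (1 + x)`, whose integral over `[-1 + 8δ², 0]` is of order `δ² |log δ|`; if
`α = 0` the reflected function is used.
-/

/-! ### Second differences of convex functions -/

/-- The symmetric second difference `f(x - u) - 2 f(x) + f(x + u)`, without the cut-off to
`[-1, 1]` that is built into `symmDelta 2`. -/
def secondDiff (f : ℝ → ℝ) (u x : ℝ) : ℝ := f (x - u) - 2 * f x + f (x + u)

lemma symmDelta_two_eq_secondDiff {f : ℝ → ℝ} {h x : ℝ} (hl : x - h ∈ Icc (-1) 1)
    (hr : x + h ∈ Icc (-1) 1) : symmDelta 2 h f x = secondDiff f h x := by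
  have hhalf : ((2 : ℕ) : ℝ) * h / 2 = h := by push_cast; ring
  rw [symmDelta, hhalf, if_pos ⟨hl, hr⟩, secondDiff]
  simp only [Finset.sum_range_succ, Finset.sum_range_zero, Nat.choose_zero_right,
    Nat.choose_one_right, Nat.choose_self]
  push_cast
  rw [show x - h + 2 * h = x + h by ring, show x - h + 1 * h = x by ring,
    show x - h + 0 * h = x - h by ring]
  ring

lemma convexOn_secondDiff {f : ℝ → ℝ} {u x : ℝ} (hf : ConvexOn ℝ (Icc (x - u) (x + u)) f) :
    ConvexOn ℝ (Icc (-u) u) (fun v ↦ secondDiff f v x) := by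
  refine ⟨convex_Icc _ _, fun v hv w hw a b ha hb hab ↦ ?_⟩
  have hleft := hf.2 (x := x - v) (y := x - w) ⟨by linarith [hv.2], by linarith [hv.1]⟩
    ⟨by linarith [hw.2], by linarith [hw.1]⟩ ha hb hab
  have hright := hf.2 (x := x + v) (y := x + w) ⟨by linarith [hv.1], by linarith [hv.2]⟩
    ⟨by linarith [hw.1], by linarith [hw.2]⟩ ha hb hab
  simp only [smul_eq_mul, secondDiff] at hleft hright ⊢
  rw [show a * (x - v) + b * (x - w) = x - (a * v + b * w) by linear_combination x * hab] at hleft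
  rw [show a * (x + v) + b * (x + w) = x + (a * v + b * w) by linear_combination x * hab] at hright
  linear_combination hleft + hright + 2 * f x * hab

/-- As a function of the step, the second difference is convex and even, so it is largest at the
ends of `[-u, u]`. -/
lemma secondDiff_le_secondDiff {f : ℝ → ℝ} {u v x : ℝ}
    (hf : ConvexOn ℝ (Icc (x - u) (x + u)) f) (hv : |v| ≤ u) :
    secondDiff f v x ≤ secondDiff f u x := by
  have hu : 0 ≤ u := (abs_nonneg v).trans hv
  have heven : secondDiff f (-u) x = secondDiff f u x := by
    simp only [secondDiff, sub_neg_eq_add, ← sub_eq_add_neg]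
    ring
  have hmax := (convexOn_secondDiff hf).le_max_of_mem_Icc (left_mem_Icc.2 (by linarith))
    (right_mem_Icc.2 (by linarith)) (abs_le.1 hv)
  simpa only [heven, max_self] using hmax

lemma secondDiff_nonneg {f : ℝ → ℝ} {u x : ℝ} (hf : ConvexOn ℝ (Icc (x - u) (x + u)) f)
    (hu : 0 ≤ u) : 0 ≤ secondDiff f u x := by
  have hzero : secondDiff f 0 x = 0 := by simp only [secondDiff, sub_zero, add_zero]; ring
  exact hzero.symm.le.trans (secondDiff_le_secondDiff hf (abs_zero.trans_le hu))

/-- The integrand is `g (x + u) - g x` with `g x = f x - f (x - u)`, so the integral telescopes. -/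
lemma integral_secondDiff {f : ℝ → ℝ} {a b u : ℝ} (hab : a ≤ b) (hu : 0 ≤ u)
    (hf : ContinuousOn f (Icc (a - u) (b + u))) :
    ∫ x in a..b, secondDiff f u x =
      (∫ x in b..b + u, (f x - f (x - u))) - ∫ x in a..a + u, (f x - f (x - u)) := by
  set g : ℝ → ℝ := fun x ↦ f x - f (x - u) with hg
  have hgc : ContinuousOn g (Icc a (b + u)) :=
    (hf.mono (Icc_subset_Icc_left (by linarith))).sub <| hf.comp (by fun_prop)
      fun x hx ↦ ⟨by linarith [hx.1], by linarith [hx.2]⟩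
  have hint {c d : ℝ} (hc : c ∈ Icc a (b + u)) (hd : d ∈ Icc a (b + u)) :
      IntervalIntegrable g volume c d :=
    (hgc.mono (uIcc_subset_Icc hc hd)).intervalIntegrable
  have ha : a ∈ Icc a (b + u) := ⟨le_rfl, by linarith⟩
  have hb : b ∈ Icc a (b + u) := ⟨hab, by linarith⟩
  have hau : a + u ∈ Icc a (b + u) := ⟨by linarith, by linarith⟩
  have hbu : b + u ∈ Icc a (b + u) := ⟨by linarith, le_rfl⟩
  calc ∫ x in a..b, secondDiff f u x = ∫ x in a..b, (g (x + u) - g x) := by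
        congr 1
        ext x
        simp only [hg, secondDiff, add_sub_cancel_right]
        ring
    _ = (∫ x in a + u..b + u, g x) - ∫ x in a..b, g x := by
        rw [intervalIntegral.integral_sub _ (hint ha hb),
          intervalIntegral.integral_comp_add_right]
        simpa only [add_sub_cancel_right] using (hint hau hbu).comp_add_right u
    _ = (∫ x in b..b + u, g x) - ∫ x in a..a + u, g x := by
        rw [← intervalIntegral.integral_add_adjacent_intervals (hint hau hb) (hint hb hbu),
          ← intervalIntegral.integral_add_adjacent_intervals (hint ha hau) (hint hau hb)]
        ring

lemma integral_secondDiff_le_of_lipschitzOnWith {f : ℝ → ℝ} {a b u : ℝ} {K : NNReal} (hab : a ≤ b)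
    (hu : 0 ≤ u) (hf : LipschitzOnWith K f (Icc (a - u) (b + u))) :
    ∫ x in a..b, secondDiff f u x ≤ 2 * K * u ^ 2 := by
  have hedge (c : ℝ) (hc : c ∈ Icc a b) :
      |∫ x in c..c + u, (f x - f (x - u))| ≤ K * u * u := by
    have hbound : ∀ x ∈ uIoc c (c + u), ‖f x - f (x - u)‖ ≤ K * u := fun x hx ↦ by
      rw [uIoc_of_le (by linarith)] at hx
      have hlip := hf.dist_le_mul x ⟨by linarith [hx.1, hc.1], by linarith [hx.2, hc.2]⟩
        (x - u) ⟨by linarith [hx.1, hc.1], by linarith [hx.2, hc.2]⟩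
      rwa [Real.dist_eq, Real.dist_eq, sub_sub_cancel, abs_of_nonneg hu] at hlip
    simpa only [add_sub_cancel_left, abs_of_nonneg hu, Real.norm_eq_abs] using
      intervalIntegral.norm_integral_le_of_norm_le_const hbound
  rw [integral_secondDiff hab hu hf.continuousOn]
  linarith [(abs_le.1 (hedge b ⟨hab, le_rfl⟩)).2, (abs_le.1 (hedge a ⟨le_rfl, hab⟩)).1]

lemma setLIntegral_mul_secondDiff_le {f w v : ℝ → ℝ} {a b u W : ℝ} {K : NNReal} (hab : a ≤ b)
    (hu : 0 ≤ u) (hf : ConvexOn ℝ (Icc (a - u) (b + u)) f)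
    (hlip : LipschitzOnWith K f (Icc (a - u) (b + u)))
    (hw : ∀ x ∈ Icc a b, w x ∈ Icc 0 W) (hv : ∀ x ∈ Icc a b, v x ∈ Icc 0 u) :
    ∫⁻ x in Icc a b, ‖w x * secondDiff f (v x) x‖ₑ ≤ ENNReal.ofReal (W * (2 * K * u ^ 2)) := by
  have hconv (x : ℝ) (hx : x ∈ Icc a b) (r : ℝ) (hr : r ≤ u) :
      ConvexOn ℝ (Icc (x - r) (x + r)) f :=
    hf.subset (Icc_subset_Icc (by linarith [hx.1]) (by linarith [hx.2])) (convex_Icc _ _)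
  have hW : 0 ≤ W := (hw a ⟨le_rfl, hab⟩).1.trans (hw a ⟨le_rfl, hab⟩).2
  have hnonneg : ∀ x ∈ Icc a b, 0 ≤ w x * secondDiff f (v x) x := fun x hx ↦
    mul_nonneg (hw x hx).1 (secondDiff_nonneg (hconv x hx _ (hv x hx).2) (hv x hx).1)
  have hle : ∀ x ∈ Icc a b, w x * secondDiff f (v x) x ≤ W * secondDiff f u x := fun x hx ↦
    mul_le_mul (hw x hx).2
      (secondDiff_le_secondDiff (hconv x hx u le_rfl)
        ((abs_of_nonneg (hv x hx).1).trans_le (hv x hx).2))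
      (secondDiff_nonneg (hconv x hx _ (hv x hx).2) (hv x hx).1) hW
  have hshift (t : ℝ) (ht : |t| ≤ u) : ContinuousOn (fun x ↦ f (x + t)) (Icc a b) :=
    hlip.continuousOn.comp (by fun_prop) fun x hx ↦
      ⟨by linarith [hx.1, (abs_le.1 ht).1], by linarith [hx.2, (abs_le.1 ht).2]⟩
  have hcont : ContinuousOn (secondDiff f u) (Icc a b) := by
    have h₀ := hshift 0 (abs_zero.trans_le hu)
    simp only [add_zero] at h₀
    exact ((hshift (-u) (by rw [abs_neg, abs_of_nonneg hu])).sub (h₀.const_mul 2)).add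
      (hshift u (abs_of_nonneg hu).le)
  calc ∫⁻ x in Icc a b, ‖w x * secondDiff f (v x) x‖ₑ
      ≤ ∫⁻ x in Icc a b, ENNReal.ofReal (W * secondDiff f u x) :=
        setLIntegral_mono' measurableSet_Icc fun x hx ↦ by
          rw [Real.enorm_eq_ofReal (hnonneg x hx)]
          exact ENNReal.ofReal_le_ofReal (hle x hx)
    _ = ENNReal.ofReal (∫ x in Icc a b, W * secondDiff f u x) := by
        refine (ofReal_integral_eq_lintegral_ofReal (hcont.const_mul W).integrableOn_Icc ?_).symm
        filter_upwards [ae_restrict_mem measurableSet_Icc] with x hx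
        exact (hnonneg x hx).trans (hle x hx)
    _ ≤ ENNReal.ofReal (W * (2 * K * u ^ 2)) := by
        rw [integral_const_mul, integral_Icc_eq_integral_Ioc,
          ← intervalIntegral.integral_of_le hab]
        gcongr
        exact integral_secondDiff_le_of_lipschitzOnWith hab hu hlip

/-! ### Divided differences and `k`-monotonicity -/

lemma sum_div_prod_erase_comp_perm {ι : Type*} [Fintype ι] [DecidableEq ι] (f : ℝ → ℝ) (x : ι → ℝ)
    (σ : Equiv.Perm ι) :
    ∑ i, f (x (σ i)) / ∏ j ∈ Finset.univ.erase i, (x (σ i) - x (σ j)) =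
      ∑ i, f (x i) / ∏ j ∈ Finset.univ.erase i, (x i - x j) := by
  rw [← Equiv.sum_comp σ fun i ↦ f (x i) / ∏ j ∈ Finset.univ.erase i, (x i - x j)]
  refine Finset.sum_congr rfl fun i _ ↦ congrArg _ (Finset.prod_equiv σ ?_ fun _ _ ↦ rfl)
  simp only [Finset.mem_erase, Finset.mem_univ, and_true, ne_eq, EmbeddingLike.apply_eq_iff_eq,
    implies_true]

lemma kMonotoneOn_iff_strictMono {k : ℕ} {f : ℝ → ℝ} :
    kMonotoneOn k f ↔ ∀ x : Fin (k + 1) → ℝ, StrictMono x → (∀ i, x i ∈ Ioo (-1 : ℝ) 1) →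
      0 ≤ ∑ i, f (x i) / ∏ j ∈ Finset.univ.erase i, (x i - x j) := by
  refine ⟨fun hf x hx ↦ hf x hx.injective, fun hf x hx hmem ↦ ?_⟩
  have hsort : StrictMono (x ∘ Tuple.sort x) :=
    (Tuple.monotone_sort x).strictMono_of_injective (hx.comp (Tuple.sort x).injective)
  rw [← sum_div_prod_erase_comp_perm f x (Tuple.sort x)]
  exact hf _ hsort fun i ↦ hmem _

lemma sum_div_prod_erase_fin_three (f : ℝ → ℝ) {x : Fin 3 → ℝ} (hx : Function.Injective x) :
    ∑ i, f (x i) / ∏ j ∈ Finset.univ.erase i, (x i - x j) =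
      ((f (x 2) - f (x 1)) / (x 2 - x 1) - (f (x 1) - f (x 0)) / (x 1 - x 0)) / (x 2 - x 0) := by
  have h10 : x 1 - x 0 ≠ 0 := sub_ne_zero.2 (hx.ne (by decide))
  have h20 : x 2 - x 0 ≠ 0 := sub_ne_zero.2 (hx.ne (by decide))
  have h21 : x 2 - x 1 ≠ 0 := sub_ne_zero.2 (hx.ne (by decide))
  have e₀ : (Finset.univ : Finset (Fin 3)).erase 0 = {1, 2} := by decide
  have e₁ : (Finset.univ : Finset (Fin 3)).erase 1 = {0, 2} := by decide
  have e₂ : (Finset.univ : Finset (Fin 3)).erase 2 = {0, 1} := by decide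
  rw [Fin.sum_univ_three, e₀, e₁, e₂, Finset.prod_pair (by decide), Finset.prod_pair (by decide),
    Finset.prod_pair (by decide), ← neg_sub (x 1) (x 0), ← neg_sub (x 2) (x 0),
    ← neg_sub (x 2) (x 1)]
  field_simp
  ring

lemma kMonotoneOn_two_iff_convexOn {f : ℝ → ℝ} :
    kMonotoneOn 2 f ↔ ConvexOn ℝ (Ioo (-1) 1) f := by
  rw [kMonotoneOn_iff_strictMono, convexOn_iff_slope_mono_adjacent]
  constructor
  · refine fun hf ↦ ⟨convex_Ioo _ _, fun x y z hx hz hxy hyz ↦ ?_⟩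
    have hmono : StrictMono ![x, y, z] := by
      rw [Fin.strictMono_iff_lt_succ]
      intro i
      fin_cases i <;> assumption
    have hmem : ∀ i, ![x, y, z] i ∈ Ioo (-1 : ℝ) 1 := by
      intro i
      fin_cases i
      exacts [hx, ⟨hx.1.trans hxy, hyz.trans hz.2⟩, hz]
    have hdd := hf _ hmono hmem
    rw [sum_div_prod_erase_fin_three f hmono.injective,
      le_div_iff₀ (sub_pos.2 (hmono (by decide))), zero_mul, sub_nonneg] at hdd
    exact hdd
  · intro ⟨_, hf⟩ x hx hmem
    rw [sum_div_prod_erase_fin_three f hx.injective]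
    exact div_nonneg
      (sub_nonneg.2 (hf (hmem 0) (hmem 2) (hx (by decide)) (hx (by decide))))
      (sub_nonneg.2 (hx (by decide)).le)

/-! ### Reflection about the origin -/

lemma jacobi_neg (α β x : ℝ) : jacobi α β (-x) = jacobi β α x := by
  rw [jacobi, jacobi, mul_comm, sub_neg_eq_add, ← sub_eq_add_neg]

lemma phiW_neg (x : ℝ) : phiW (-x) = phiW x := by
  rw [phiW, phiW, neg_sq]

lemma LpOn_comp_neg (g : ℝ → ℝ) (p : ℝ≥0∞) (a b : ℝ) :
    LpOn (fun x ↦ g (-x)) p (-b) (-a) = LpOn g p a b := by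
  have hneg := (Measure.measurePreserving_neg (volume : Measure ℝ)).restrict_preimage
    (measurableSet_Icc (a := a) (b := b))
  rw [Set.neg_preimage, Set.neg_Icc] at hneg
  rw [LpOn, LpOn, ← hneg.map_eq]
  exact ((MeasurableEquiv.neg ℝ).measurableEmbedding.eLpNorm_map_measure).symm

lemma symmDelta_comp_neg (k : ℕ) (h : ℝ) (f : ℝ → ℝ) (x : ℝ) :
    symmDelta k h (fun y ↦ f (-y)) x = (-1) ^ k * symmDelta k h f (-x) := by
  have hdom : (x - k * h / 2 ∈ Icc (-1 : ℝ) 1 ∧ x + k * h / 2 ∈ Icc (-1 : ℝ) 1) ↔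
      (-x - k * h / 2 ∈ Icc (-1 : ℝ) 1 ∧ -x + k * h / 2 ∈ Icc (-1 : ℝ) 1) := by
    simp only [mem_Icc]
    constructor <;> rintro ⟨⟨_, _⟩, _, _⟩ <;> refine ⟨⟨?_, ?_⟩, ?_, ?_⟩ <;> linarith
  simp only [symmDelta, hdom, mul_ite, mul_zero]
  refine if_congr Iff.rfl ?_ rfl
  rw [Finset.mul_sum, ← Finset.sum_range_reflect]
  refine Finset.sum_congr rfl fun i hi ↦ ?_
  have hik : i ≤ k := Nat.lt_succ_iff.1 (Finset.mem_range.1 hi)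
  have hsign : (-1 : ℝ) ^ k * (-1) ^ (k - i) = (-1) ^ i := by
    obtain ⟨m, rfl⟩ := Nat.exists_eq_add_of_le hik
    rw [Nat.add_sub_cancel_left, pow_add, mul_assoc, ← mul_pow, neg_one_mul, neg_neg, one_pow,
      mul_one]
  rw [Nat.add_sub_cancel, Nat.choose_symm hik, Nat.sub_sub_self hik, Nat.cast_sub hik, ← hsign,
    show -(x - k * h / 2 + (k - i) * h) = -x - k * h / 2 + i * h by ring]
  ring

lemma LpOn_neg_one_pow_mul (k : ℕ) (g : ℝ → ℝ) (p : ℝ≥0∞) (a b : ℝ) :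
    LpOn (fun x ↦ (-1) ^ k * g x) p a b = LpOn g p a b :=
  eLpNorm_congr_norm_ae <| .of_forall fun x ↦ by
    rw [norm_mul, norm_pow, norm_neg, norm_one, one_pow, one_mul]

lemma OmegaMain_comp_neg (k : ℕ) (f : ℝ → ℝ) (δ : ℝ) (wt : ℝ → ℝ) (p : ℝ≥0∞) :
    OmegaMain k (fun x ↦ f (-x)) δ (fun x ↦ wt (-x)) p = OmegaMain k f δ wt p := by
  refine iSup_congr fun h ↦ iSup_congr fun _ ↦ ?_
  simp only [symmDelta_comp_neg, mul_left_comm _ ((-1 : ℝ) ^ k), LpOn_neg_one_pow_mul]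
  rw [← LpOn_comp_neg (fun x ↦ wt x * symmDelta k (h * phiW x) f x)]
  simp only [phiW_neg]
  congr 1 <;> ring

lemma OmegaFwd_comp_neg (k : ℕ) (f : ℝ → ℝ) (δ : ℝ) (wt : ℝ → ℝ) (p : ℝ≥0∞) :
    OmegaFwd k (fun x ↦ f (-x)) δ (fun x ↦ wt (-x)) p = OmegaBwd k f δ wt p := by
  refine iSup_congr fun h ↦ iSup_congr fun _ ↦ ?_
  simp only [symmDelta_comp_neg, mul_left_comm _ ((-1 : ℝ) ^ k), LpOn_neg_one_pow_mul]
  rw [← LpOn_comp_neg (fun x ↦ wt x * symmDelta k h f (x - k * h / 2))]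
  simp only [neg_add']
  congr 1
  ring

lemma OmegaBwd_comp_neg (k : ℕ) (f : ℝ → ℝ) (δ : ℝ) (wt : ℝ → ℝ) (p : ℝ≥0∞) :
    OmegaBwd k (fun x ↦ f (-x)) δ (fun x ↦ wt (-x)) p = OmegaFwd k f δ wt p := by
  simpa only [neg_neg] using (OmegaFwd_comp_neg k (fun x ↦ f (-x)) δ (fun x ↦ wt (-x)) p).symm

lemma omegaDT_comp_neg (k : ℕ) (f : ℝ → ℝ) (δ : ℝ) (wt : ℝ → ℝ) (p : ℝ≥0∞) :
    omegaDT k (fun x ↦ f (-x)) δ (fun x ↦ wt (-x)) p = omegaDT k f δ wt p := by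
  simp only [omegaDT, OmegaMain_comp_neg, OmegaFwd_comp_neg, OmegaBwd_comp_neg]
  exact add_right_comm _ _ _

lemma comp_neg_mem_BSet {p : ℝ≥0∞} {α β : ℝ} {f : ℝ → ℝ} (hf : f ∈ BSet p α β) :
    (fun x ↦ f (-x)) ∈ BSet p β α := by
  refine ⟨hf.1.comp measurable_neg, hf.2 ▸ ?_⟩
  simpa only [jacobi_neg, neg_neg] using
    LpOn_comp_neg (fun x ↦ jacobi α β x * f x) p (-1) 1

lemma comp_neg_mem_MSet {k : ℕ} (hk : Even k) {f : ℝ → ℝ} (hf : f ∈ MSet k) :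
    (fun x ↦ f (-x)) ∈ MSet k := by
  intro x hx hmem
  have hdd := hf (fun i ↦ -x i) (neg_injective.comp hx) fun i ↦
    ⟨neg_lt_neg (hmem i).2, neg_lt.1 (hmem i).1⟩
  refine hdd.trans_eq (Finset.sum_congr rfl fun i _ ↦ congrArg _ ?_)
  have hcard : (Finset.univ.erase i).card = k := by
    rw [Finset.card_erase_of_mem (Finset.mem_univ i), Finset.card_univ, Fintype.card_fin,
      Nat.add_sub_cancel]
  calc ∏ j ∈ Finset.univ.erase i, (-x i - -x j)
      = ∏ j ∈ Finset.univ.erase i, -1 * (x i - x j) := Finset.prod_congr rfl fun j _ ↦ by ring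
    _ = ∏ j ∈ Finset.univ.erase i, (x i - x j) := by
        rw [Finset.prod_mul_distrib, Finset.prod_const, hcard, hk.neg_one_pow, one_mul]

/-! ### The upper bound -/

lemma jacobi_pos (α β : ℝ) {x : ℝ} (hx : x ∈ Ioo (-1 : ℝ) 1) : 0 < jacobi α β x :=
  mul_pos (Real.rpow_pos_of_pos (by linarith [hx.1]) _)
    (Real.rpow_pos_of_pos (by linarith [hx.2]) _)

lemma continuousOn_jacobi (α β : ℝ) : ContinuousOn (jacobi α β) (Ioo (-1) 1) :=
  .mul (.rpow_const (by fun_prop) fun x hx ↦ .inl (by linarith [hx.1]))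
    (.rpow_const (by fun_prop) fun x hx ↦ .inl (by linarith [hx.2]))

lemma jacobi_le_rpow_mul_jacobi {α β C x y : ℝ} (hα : 0 ≤ α) (hβ : 0 ≤ β) (hC : 0 < C)
    (hx : x ∈ Icc (-1) 1) (hleft : 1 + x ≤ C * (1 + y)) (hright : 1 - x ≤ C * (1 - y)) :
    jacobi α β x ≤ C ^ (α + β) * jacobi α β y := by
  have hx₁ : 0 ≤ 1 + x := by linarith [hx.1]
  have hx₂ : 0 ≤ 1 - x := by linarith [hx.2]
  have hy₁ : 0 ≤ 1 + y := nonneg_of_mul_nonneg_right (hx₁.trans hleft) hC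
  have hy₂ : 0 ≤ 1 - y := nonneg_of_mul_nonneg_right (hx₂.trans hright) hC
  calc (1 + x) ^ α * (1 - x) ^ β ≤ (C * (1 + y)) ^ α * (C * (1 - y)) ^ β := by gcongr
    _ = C ^ (α + β) * ((1 + y) ^ α * (1 - y) ^ β) := by
        rw [Real.mul_rpow hC.le hy₁, Real.mul_rpow hC.le hy₂, Real.rpow_add hC]
        ring

lemma mul_phiW_mem_Icc {h d x : ℝ} (hh : 0 ≤ h) (hx : 1 + x ≤ d) :
    h * phiW x ∈ Icc 0 (h * √(2 * d)) :=
  ⟨mul_nonneg hh (Real.sqrt_nonneg _), mul_le_mul_of_nonneg_left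
    (Real.sqrt_le_sqrt (by nlinarith [sq_nonneg (1 + x)])) hh⟩

lemma mul_sqrt_two_mul_le_half {h d : ℝ} (hd : 0 ≤ d) (hhd : 8 * h ^ 2 ≤ d) :
    h * √(2 * d) ≤ d / 2 :=
  le_of_sq_le_sq (by rw [mul_pow, Real.sq_sqrt (by positivity)]; nlinarith) (by positivity)

/-- The closed unit ball of `W_∞^{α,β} ∩ M²`, with the weighted bound holding at every point of
`(-1, 1)` and not merely almost everywhere. -/
structure IsJacobiBoundedConvex (α β : ℝ) (f : ℝ → ℝ) : Prop where
  convexOn : ConvexOn ℝ (Ioo (-1) 1) f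
  jacobi_mul_abs_le_one : ∀ x ∈ Ioo (-1 : ℝ) 1, jacobi α β x * |f x| ≤ 1

lemma le_of_ae_le_of_continuousOn {g : ℝ → ℝ} {U : Set ℝ} {C : ℝ} (hU : IsOpen U)
    (hg : ContinuousOn g U) (hle : ∀ᵐ x ∂volume.restrict U, g x ≤ C) {x : ℝ} (hx : x ∈ U) :
    g x ≤ C := by
  have hmax : (fun x ↦ max (g x) C) =ᵐ[volume.restrict U] fun _ ↦ C :=
    hle.mono fun _ ↦ max_eq_right
  exact max_eq_right_iff.1 <|
    Measure.eqOn_open_of_ae_eq hmax hU (hg.sup continuousOn_const) continuousOn_const hx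

lemma isJacobiBoundedConvex_of_mem {α β : ℝ} {f : ℝ → ℝ} (hf : f ∈ BSet ∞ α β ∩ MSet 2) :
    IsJacobiBoundedConvex α β f := by
  obtain ⟨⟨-, hnorm⟩, hmono⟩ := hf
  have hconv : ConvexOn ℝ (Ioo (-1) 1) f := kMonotoneOn_two_iff_convexOn.1 hmono
  refine ⟨hconv, fun x hx ↦ le_of_ae_le_of_continuousOn isOpen_Ioo
    ((continuousOn_jacobi α β).mul (hconv.continuousOn isOpen_Ioo).abs) ?_ hx⟩
  have hae : ∀ᵐ x ∂volume.restrict (Icc (-1 : ℝ) 1), ‖jacobi α β x * f x‖ₑ ≤ 1 := by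
    rw [← hnorm, LpOn, eLpNorm_exponent_top]
    exact ae_le_eLpNormEssSup
  filter_upwards [ae_restrict_of_ae_restrict_of_subset Ioo_subset_Icc_self hae,
    ae_restrict_mem measurableSet_Ioo] with x hle hx
  rwa [Real.enorm_eq_ofReal_abs, abs_mul, abs_of_pos (jacobi_pos α β hx),
    ENNReal.ofReal_le_one] at hle

lemma setLIntegral_Icc_le_of_geometric {g : ℝ → ℝ≥0∞} {B : ℝ≥0∞} {a q ε : ℝ} (hq₀ : 0 < q)
    (hq₁ : q < 1) (hε₀ : 0 < ε) (hε₁ : ε ≤ 1)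
    (hg : ∀ d ∈ Icc ε 1, ∫⁻ x in Icc (a + q * d) (a + d), g x ≤ B) :
    ∫⁻ x in Icc (a + ε) (a + 1), g x ≤ (⌊Real.log ε / Real.log q⌋₊ + 1) * B := by
  set N := ⌊Real.log ε / Real.log q⌋₊
  set d : Fin (N + 1) → ℝ := fun n ↦ max (q ^ (n : ℕ)) ε
  have hd (n) : d n ∈ Icc ε 1 := ⟨le_max_right _ _, max_le (pow_le_one₀ hq₀.le hq₁.le) hε₁⟩
  have hcover : Icc (a + ε) (a + 1) ⊆ ⋃ n, Icc (a + q * d n) (a + d n) := fun x hx ↦ by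
    obtain ⟨n, hlt, hle⟩ := exists_nat_pow_near_of_lt_one (x := x - a)
      (by linarith [hx.1]) (by linarith [hx.2]) hq₀ hq₁
    have hεn : ε ≤ q ^ n := by linarith [hx.1]
    have hnN : n ≤ N := by
      refine Nat.le_floor ?_
      rw [le_div_iff_of_neg (Real.log_neg hq₀ hq₁), ← Real.log_pow]
      exact Real.log_le_log hε₀ hεn
    refine mem_iUnion.2 ⟨⟨n, Nat.lt_succ_of_le hnN⟩, ?_⟩
    simp only [d, max_eq_left hεn, ← pow_succ']
    exact ⟨by linarith, by linarith⟩
  calc ∫⁻ x in Icc (a + ε) (a + 1), g x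
      ≤ ∫⁻ x in ⋃ n, Icc (a + q * d n) (a + d n), g x := lintegral_mono_set hcover
    _ ≤ ∑' n, ∫⁻ x in Icc (a + q * d n) (a + d n), g x := lintegral_iUnion_le _ _
    _ ≤ ∑' _ : Fin (N + 1), B := ENNReal.tsum_le_tsum fun n ↦ hg _ (hd n)
    _ = (N + 1) * B := by
        rw [tsum_fintype, Finset.sum_const, Finset.card_univ, Fintype.card_fin, nsmul_eq_mul]
        push_cast
        rfl

lemma one_le_abs_log {δ : ℝ} (hδ₀ : 0 < δ) (hδ₁ : δ ≤ Real.exp (-1)) : 1 ≤ |Real.log δ| := by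
  have hlog : Real.log δ ≤ -1 := (Real.log_le_iff_le_exp hδ₀).2 hδ₁
  rw [abs_of_neg (by linarith)]
  linarith

lemma sq_mul_abs_log_le {h δ : ℝ} (hh : 0 < h) (hhδ : h ≤ δ) (hδ : δ ≤ Real.exp (-1)) :
    h ^ 2 * |Real.log h| ≤ δ ^ 2 * |Real.log δ| := by
  have hδ₁ : δ < 1 := hδ.trans_lt (by simp)
  have hsq : δ ^ 2 ≤ Real.exp (-1) := (by nlinarith : δ ^ 2 ≤ δ).trans hδ
  have hanti := Real.mul_log_strictAntiOn.antitoneOn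
    (a := h ^ 2) (b := δ ^ 2) ⟨by positivity, (by gcongr : h ^ 2 ≤ δ ^ 2).trans hsq⟩
    ⟨by positivity, hsq⟩ (by gcongr)
  simp only [Real.log_pow] at hanti
  rw [abs_of_neg (Real.log_neg hh (by linarith)), abs_of_neg (Real.log_neg (by linarith) hδ₁)]
  push_cast at hanti
  linarith

lemma one_fourth_lt_exp_neg_one : (1 / 4 : ℝ) < Real.exp (-1) := by
  rw [Real.exp_neg, one_div, inv_lt_inv₀ (by norm_num) (Real.exp_pos 1)]
  linarith [Real.exp_one_lt_d9]

lemma floor_log_div_log_add_one_le {h : ℝ} (hh₀ : 0 < h) (hh₁ : h < 1 / 4) :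
    (⌊Real.log (8 * h ^ 2) / Real.log (3 / 4)⌋₊ + 1 : ℝ) ≤ 9 * |Real.log h| := by
  have hone := one_le_abs_log hh₀ (hh₁.trans one_fourth_lt_exp_neg_one).le
  rw [abs_of_neg (Real.log_neg hh₀ (by linarith))] at hone ⊢
  have hlog₈ : 0 < Real.log 8 := Real.log_pos (by norm_num)
  have hlog : Real.log (3 / 4) ≤ -(1 / 4) := by
    linarith [Real.log_le_sub_one_of_pos (show (0 : ℝ) < 3 / 4 by norm_num)]
  have hratio : Real.log (8 * h ^ 2) / Real.log (3 / 4) ≤ 8 * -Real.log h := by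
    rw [div_le_iff_of_neg (by linarith), Real.log_mul (by norm_num) (by positivity), Real.log_pow]
    push_cast
    nlinarith
  have hfloor : (⌊Real.log (8 * h ^ 2) / Real.log (3 / 4)⌋₊ : ℝ) ≤ 8 * -Real.log h :=
    (Nat.cast_le.2 (Nat.floor_mono hratio)).trans (Nat.floor_le (by linarith))
  linarith

namespace IsJacobiBoundedConvex

variable {α β : ℝ} {f : ℝ → ℝ}

lemma comp_neg (hf : IsJacobiBoundedConvex α β f) :
    IsJacobiBoundedConvex β α (fun x ↦ f (-x)) where
  convexOn := by
    have hconv := hf.convexOn.comp_linearMap (-LinearMap.id)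
    have hpre : (-LinearMap.id : ℝ →ₗ[ℝ] ℝ) ⁻¹' Ioo (-1) 1 = Ioo (-1) 1 := by
      ext x
      simp [neg_lt, and_comm]
    rwa [hpre] at hconv
  jacobi_mul_abs_le_one x hx := by
    rw [← jacobi_neg]
    exact hf.jacobi_mul_abs_le_one (-x) ⟨by linarith [hx.2], by linarith [hx.1]⟩

lemma jacobi_mul_abs_le_rpow (hf : IsJacobiBoundedConvex α β f) (hα : 0 ≤ α) (hβ : 0 ≤ β)
    {C x y : ℝ} (hC : 0 < C) (hx : x ∈ Icc (-1) 1) (hy : y ∈ Ioo (-1) 1)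
    (hleft : 1 + x ≤ C * (1 + y)) (hright : 1 - x ≤ C * (1 - y)) :
    jacobi α β x * |f y| ≤ C ^ (α + β) :=
  calc jacobi α β x * |f y| ≤ C ^ (α + β) * jacobi α β y * |f y| := by
        gcongr
        exact jacobi_le_rpow_mul_jacobi hα hβ hC hx hleft hright
    _ = C ^ (α + β) * (jacobi α β y * |f y|) := mul_assoc _ _ _
    _ ≤ C ^ (α + β) * 1 := by
        gcongr
        exact hf.jacobi_mul_abs_le_one y hy
    _ = C ^ (α + β) := mul_one _

lemma lipschitzOnWith_ball (hf : IsJacobiBoundedConvex α β f) (hα : 0 ≤ α) (hβ : 0 ≤ β) {d : ℝ}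
    (hd₀ : 0 < d) (hd₁ : d ≤ 1) :
    LipschitzOnWith (2 * (8 ^ (α + β) / jacobi α β (-1 + 7 / 8 * d)) / (d / 16)).toNNReal f
      (Metric.ball (-1 + 7 / 8 * d) (3 / 4 * d - d / 16)) := by
  have hsub : Metric.ball (-1 + 7 / 8 * d) (3 / 4 * d) ⊆ Ioo (-1) 1 := by
    rw [Real.ball_eq_Ioo]
    exact Ioo_subset_Ioo (by linarith) (by linarith)
  refine (hf.convexOn.subset hsub (convex_ball _ _)).lipschitzOnWith_of_abs_le (by positivity)
    fun y hy ↦ ?_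
  rw [le_div_iff₀' (jacobi_pos α β ⟨by linarith, by linarith⟩)]
  have hy' := hsub hy
  rw [Real.dist_eq, abs_lt] at hy
  exact hf.jacobi_mul_abs_le_rpow hα hβ (by norm_num) ⟨by linarith, by linarith⟩ hy'
    (by linarith) (by linarith)

/-- For `x` in the block `1 + x ∈ [3d/4, d]` the step `h φ(x)` is at most `u = h √(2d) ≤ d / 2`,
while `f` is Lipschitz with constant of order `(d w)⁻¹` near the block, so the weighted integral
is of order `w · (d w)⁻¹ · u² ∼ h²`, independently of `d`. -/
lemma setLIntegral_block_le (hf : IsJacobiBoundedConvex α β f) (hα : 0 ≤ α) (hβ : 0 ≤ β)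
    {h d : ℝ} (hh : 0 < h) (hhd : 8 * h ^ 2 ≤ d) (hd₁ : d ≤ 1) :
    ∫⁻ x in Icc (-1 + 3 / 4 * d) (-1 + d), ‖jacobi α β x * symmDelta 2 (h * phiW x) f x‖ₑ ≤
      ENNReal.ofReal (128 * 16 ^ (α + β) * h ^ 2) := by
  have hd₀ : 0 < d := lt_of_lt_of_le (by positivity) hhd
  set u := h * √(2 * d) with hu
  have hud : u ≤ d / 2 := mul_sqrt_two_mul_le_half hd₀.le hhd
  set x₀ := -1 + 7 / 8 * d with hx₀
  have hw₀ : 0 < jacobi α β x₀ := jacobi_pos α β ⟨by linarith, by linarith⟩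
  have hlip : LipschitzOnWith (2 * (8 ^ (α + β) / jacobi α β x₀) / (d / 16)).toNNReal f
      (Icc (-1 + 3 / 4 * d - u) (-1 + d + u)) := by
    refine (hf.lipschitzOnWith_ball hα hβ hd₀ hd₁).mono ?_
    rw [Real.ball_eq_Ioo]
    exact Icc_subset_Ioo (by linarith) (by linarith)
  have hstep : ∀ x ∈ Icc (-1 + 3 / 4 * d) (-1 + d), h * phiW x ∈ Icc 0 u := fun x hx ↦
    mul_phiW_mem_Icc hh.le (by linarith [hx.2])
  have hweight : ∀ x ∈ Icc (-1 + 3 / 4 * d) (-1 + d),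
      jacobi α β x ∈ Icc 0 (2 ^ (α + β) * jacobi α β x₀) := fun x ⟨hx₁, hx₂⟩ ↦
    ⟨mul_nonneg (Real.rpow_nonneg (by linarith) _) (Real.rpow_nonneg (by linarith) _),
      jacobi_le_rpow_mul_jacobi hα hβ two_pos ⟨by linarith, by linarith⟩ (by linarith)
        (by linarith)⟩
  calc ∫⁻ x in Icc (-1 + 3 / 4 * d) (-1 + d), ‖jacobi α β x * symmDelta 2 (h * phiW x) f x‖ₑ
      = ∫⁻ x in Icc (-1 + 3 / 4 * d) (-1 + d), ‖jacobi α β x * secondDiff f (h * phiW x) x‖ₑ := by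
        refine setLIntegral_congr_fun measurableSet_Icc fun x hx ↦ ?_
        obtain ⟨hv₀, hvu⟩ := hstep x hx
        rw [symmDelta_two_eq_secondDiff ⟨by linarith [hx.1], by linarith [hx.2]⟩
          ⟨by linarith [hx.1], by linarith [hx.2]⟩]
    _ ≤ _ := setLIntegral_mul_secondDiff_le (by linarith) (by positivity)
        (hf.convexOn.subset (Icc_subset_Ioo (by linarith) (by linarith)) (convex_Icc _ _))
        hlip hweight hstep
    _ = ENNReal.ofReal (128 * 16 ^ (α + β) * h ^ 2) := by
        congr 1
        clear_value x₀
        rw [Real.coe_toNNReal _ (by positivity), hu, mul_pow, Real.sq_sqrt (by positivity),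
          show (16 : ℝ) = 2 * 8 by norm_num, Real.mul_rpow (by norm_num) (by norm_num)]
        field_simp
        norm_num

lemma setLIntegral_left_half_le (hf : IsJacobiBoundedConvex α β f) (hα : 0 ≤ α) (hβ : 0 ≤ β)
    {h : ℝ} (hh₀ : 0 < h) (hh₁ : h < 1 / 4) :
    ∫⁻ x in Icc (-1 + 8 * h ^ 2) 0, ‖jacobi α β x * symmDelta 2 (h * phiW x) f x‖ₑ ≤
      ENNReal.ofReal (1152 * 16 ^ (α + β) * (h ^ 2 * |Real.log h|)) := by
  have hblocks := setLIntegral_Icc_le_of_geometric (a := -1) (q := 3 / 4) (ε := 8 * h ^ 2)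
    (by norm_num) (by norm_num) (by positivity) (by nlinarith)
    fun d hd ↦ hf.setLIntegral_block_le hα hβ hh₀ hd.1 hd.2
  rw [neg_add_cancel] at hblocks
  refine hblocks.trans ?_
  set N := ⌊Real.log (8 * h ^ 2) / Real.log (3 / 4)⌋₊
  have hN : (N + 1 : ℝ) ≤ 9 * |Real.log h| := floor_log_div_log_add_one_le hh₀ hh₁
  calc (N + 1 : ℝ≥0∞) * ENNReal.ofReal (128 * 16 ^ (α + β) * h ^ 2)
      = ENNReal.ofReal ((N + 1) * (128 * 16 ^ (α + β) * h ^ 2)) := by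
        rw [ENNReal.ofReal_mul (p := (N + 1 : ℝ)) (by positivity),
          ENNReal.ofReal_add (by positivity) zero_le_one, ENNReal.ofReal_natCast,
          ENNReal.ofReal_one]
    _ ≤ ENNReal.ofReal (9 * |Real.log h| * (128 * 16 ^ (α + β) * h ^ 2)) := by gcongr
    _ = ENNReal.ofReal (1152 * 16 ^ (α + β) * (h ^ 2 * |Real.log h|)) := by ring_nf

lemma setLIntegral_right_half_le (hf : IsJacobiBoundedConvex α β f) (hα : 0 ≤ α) (hβ : 0 ≤ β)
    {h : ℝ} (hh₀ : 0 < h) (hh₁ : h < 1 / 4) :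
    ∫⁻ x in Icc 0 (1 - 8 * h ^ 2), ‖jacobi α β x * symmDelta 2 (h * phiW x) f x‖ₑ ≤
      ENNReal.ofReal (1152 * 16 ^ (α + β) * (h ^ 2 * |Real.log h|)) := by
  have hreflect := LpOn_comp_neg (fun x ↦ jacobi α β x * symmDelta 2 (h * phiW x) f x) 1 0
    (1 - 8 * h ^ 2)
  simp only [LpOn, eLpNorm_one_eq_lintegral_enorm, jacobi_neg, phiW_neg, neg_zero,
    neg_sub] at hreflect
  rw [← hreflect, add_comm α β, sub_eq_neg_add]
  simpa only [symmDelta_comp_neg, even_two.neg_one_pow, one_mul] using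
    hf.comp_neg.setLIntegral_left_half_le hβ hα hh₀ hh₁

lemma OmegaMain_le (hf : IsJacobiBoundedConvex α β f) (hα : 0 ≤ α) (hβ : 0 ≤ β)
    {δ : ℝ} (hδ : δ < 1 / 4) :
    OmegaMain 2 f δ (jacobi α β) 1 ≤
      ENNReal.ofReal (2304 * 16 ^ (α + β) * (δ ^ 2 * |Real.log δ|)) := by
  refine iSup₂_le fun h ⟨hh₀, hhδ⟩ ↦ ?_
  have hh₁ : h < 1 / 4 := hhδ.trans_lt hδ
  have hcoef : 2 * ((2 : ℕ) : ℝ) ^ 2 * h ^ 2 = 8 * h ^ 2 := by norm_num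
  rw [LpOn, eLpNorm_one_eq_lintegral_enorm, hcoef,
    ← Icc_union_Icc_eq_Icc (b := 0) (by nlinarith) (by nlinarith)]
  calc _ ≤ _ := lintegral_union_le _ _ _
    _ ≤ ENNReal.ofReal (1152 * 16 ^ (α + β) * (h ^ 2 * |Real.log h|)) +
          ENNReal.ofReal (1152 * 16 ^ (α + β) * (h ^ 2 * |Real.log h|)) :=
        add_le_add (hf.setLIntegral_left_half_le hα hβ hh₀ hh₁)
          (hf.setLIntegral_right_half_le hα hβ hh₀ hh₁)
    _ = ENNReal.ofReal (2304 * 16 ^ (α + β) * (h ^ 2 * |Real.log h|)) := by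
        rw [← ENNReal.ofReal_add (by positivity) (by positivity)]
        ring_nf
    _ ≤ ENNReal.ofReal (2304 * 16 ^ (α + β) * (δ ^ 2 * |Real.log δ|)) := by
        gcongr ENNReal.ofReal (_ * ?_)
        exact sq_mul_abs_log_le hh₀ hhδ (hδ.trans one_fourth_lt_exp_neg_one).le

lemma abs_jacobi_mul_secondDiff_le (hf : IsJacobiBoundedConvex α β f) (hα : 0 ≤ α)
    (hβ : 0 ≤ β) {h x : ℝ} (hh : h ∈ Icc (0 : ℝ) (1 / 2)) (hx : x ∈ Ioc (-1) (-(1 / 2))) :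
    |jacobi α β x * secondDiff f h (x + h)| ≤ 4 * 16 ^ (α + β) := by
  obtain ⟨hh₀, hh₁⟩ := hh
  obtain ⟨hx₀, hx₁⟩ := hx
  have hbound {y : ℝ} (hxy : x ≤ y) (hy : y ≤ 1 / 2) : |jacobi α β x * f y| ≤ 16 ^ (α + β) := by
    rw [abs_mul, abs_of_pos (jacobi_pos α β ⟨hx₀, by linarith⟩)]
    exact hf.jacobi_mul_abs_le_rpow hα hβ (by norm_num) ⟨hx₀.le, by linarith⟩
      ⟨by linarith, by linarith⟩ (by linarith) (by linarith)
  have h₀ := abs_le.1 (hbound (y := x + h - h) (by linarith) (by linarith))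
  have h₁ := abs_le.1 (hbound (y := x + h) (by linarith) (by linarith))
  have h₂ := abs_le.1 (hbound (y := x + h + h) (by linarith) (by linarith))
  rw [secondDiff, abs_le]
  constructor <;> linarith

lemma OmegaFwd_le (hf : IsJacobiBoundedConvex α β f) (hα : 0 ≤ α) (hβ : 0 ≤ β)
    {δ : ℝ} (hδ₀ : 0 < δ) (hδ₁ : δ < 1 / 4) :
    OmegaFwd 2 f δ (jacobi α β) 1 ≤ ENNReal.ofReal (32 * 16 ^ (α + β) * δ ^ 2) := by
  have hcoef : 2 * ((2 : ℕ) : ℝ) ^ 2 * δ ^ 2 = 8 * δ ^ 2 := by norm_num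
  have hδ_sq : 8 * δ ^ 2 ≤ 1 / 2 := by nlinarith
  refine iSup₂_le fun h ⟨hh₀, hhδ⟩ ↦ ?_
  have hhalf : ((2 : ℕ) : ℝ) * h / 2 = h := by push_cast; ring
  rw [hcoef] at hhδ
  rw [LpOn, eLpNorm_one_eq_lintegral_enorm, hcoef, hhalf, ← setLIntegral_congr Ioc_ae_eq_Icc]
  calc ∫⁻ x in Ioc (-1) (-1 + 8 * δ ^ 2), ‖jacobi α β x * symmDelta 2 h f (x + h)‖ₑ
      ≤ ∫⁻ _ in Ioc (-1) (-1 + 8 * δ ^ 2), ENNReal.ofReal (4 * 16 ^ (α + β)) := by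
        refine setLIntegral_mono' measurableSet_Ioc fun x hx ↦ ?_
        rw [Real.enorm_eq_ofReal_abs, symmDelta_two_eq_secondDiff
          ⟨by linarith [hx.1], by linarith [hx.2]⟩ ⟨by linarith [hx.1], by linarith [hx.2]⟩]
        exact ENNReal.ofReal_le_ofReal <| hf.abs_jacobi_mul_secondDiff_le hα hβ
          ⟨hh₀.le, by linarith⟩ ⟨hx.1, by linarith [hx.2]⟩
    _ = ENNReal.ofReal (32 * 16 ^ (α + β) * δ ^ 2) := by
        rw [setLIntegral_const, Real.volume_Ioc, ← ENNReal.ofReal_mul (by positivity)]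
        ring_nf

lemma OmegaBwd_le (hf : IsJacobiBoundedConvex α β f) (hα : 0 ≤ α) (hβ : 0 ≤ β)
    {δ : ℝ} (hδ₀ : 0 < δ) (hδ₁ : δ < 1 / 4) :
    OmegaBwd 2 f δ (jacobi α β) 1 ≤ ENNReal.ofReal (32 * 16 ^ (α + β) * δ ^ 2) := by
  rw [← OmegaFwd_comp_neg, add_comm α β]
  simpa only [jacobi_neg] using hf.comp_neg.OmegaFwd_le hβ hα hδ₀ hδ₁

lemma omegaDT_le (hf : IsJacobiBoundedConvex α β f) (hα : 0 ≤ α) (hβ : 0 ≤ β)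
    {δ : ℝ} (hδ₀ : 0 < δ) (hδ₁ : δ < 1 / 4) :
    omegaDT 2 f δ (jacobi α β) 1 ≤
      ENNReal.ofReal (2368 * 16 ^ (α + β) * δ ^ 2 * |Real.log δ|) := by
  have hlog : 1 ≤ |Real.log δ| := one_le_abs_log hδ₀ (hδ₁.trans one_fourth_lt_exp_neg_one).le
  calc omegaDT 2 f δ (jacobi α β) 1
      ≤ ENNReal.ofReal (2304 * 16 ^ (α + β) * (δ ^ 2 * |Real.log δ|)) +
          ENNReal.ofReal (32 * 16 ^ (α + β) * δ ^ 2) +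
          ENNReal.ofReal (32 * 16 ^ (α + β) * δ ^ 2) :=
        add_le_add_three (hf.OmegaMain_le hα hβ hδ₁) (hf.OmegaFwd_le hα hβ hδ₀ hδ₁)
          (hf.OmegaBwd_le hα hβ hδ₀ hδ₁)
    _ = ENNReal.ofReal (16 ^ (α + β) * δ ^ 2 * (2304 * |Real.log δ| + 64)) := by
        rw [← ENNReal.ofReal_add (by positivity) (by positivity),
          ← ENNReal.ofReal_add (by positivity) (by positivity)]
        ring_nf
    _ ≤ ENNReal.ofReal (16 ^ (α + β) * δ ^ 2 * (2368 * |Real.log δ|)) := by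
        gcongr
        linarith
    _ = ENNReal.ofReal (2368 * 16 ^ (α + β) * δ ^ 2 * |Real.log δ|) := by ring_nf

end IsJacobiBoundedConvex

/-! ### The lower bound -/

lemma one_add_mul_one_sub_le_rpow_neg {a y : ℝ} (ha : 0 ≤ a) (hy : 0 < y) :
    1 + a * (1 - y) ≤ y ^ (-a) := by
  calc 1 + a * (1 - y) ≤ Real.log y * -a + 1 := by
        nlinarith [Real.log_le_sub_one_of_pos hy]
    _ ≤ Real.exp (Real.log y * -a) := Real.add_one_le_exp _
    _ = y ^ (-a) := (Real.rpow_def_of_pos hy _).symm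

lemma mul_sq_mul_rpow_neg_le_secondDiff {α t u : ℝ} (hα : 0 ≤ α) (ht : 0 < t) (hu : |u| < t) :
    α * (u / t) ^ 2 * t ^ (-α) ≤ secondDiff (fun x ↦ x ^ (-α)) u t := by
  obtain ⟨hu₁, hu₂⟩ := abs_lt.1 hu
  have hminus : 0 < t - u := by linarith
  have hplus : 0 < t + u := by linarith
  have hs : 0 < 1 - (u / t) ^ 2 := by
    rw [sub_pos, sq_lt_one_iff_abs_lt_one, abs_div, abs_of_pos ht, div_lt_one ht]
    exact hu
  have hsq {y : ℝ} (hy : 0 < y) : (y ^ (-(α / 2))) ^ 2 = y ^ (-α) := by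
    rw [← Real.rpow_mul_natCast hy.le]
    congr 1
    push_cast
    ring
  have hprod : (t - u) ^ (-(α / 2)) * (t + u) ^ (-(α / 2)) =
      t ^ (-α) * (1 - (u / t) ^ 2) ^ (-(α / 2)) := by
    rw [← Real.mul_rpow hminus.le hplus.le, ← hsq ht, sq, ← Real.mul_rpow ht.le ht.le,
      ← Real.mul_rpow (by positivity) hs.le]
    congr 1
    field_simp
    ring
  have hbernoulli := one_add_mul_one_sub_le_rpow_neg (by linarith : 0 ≤ α / 2) hs
  rw [secondDiff, ← hsq hminus, ← hsq hplus]
  have hamgm := two_mul_le_add_sq ((t - u) ^ (-(α / 2))) ((t + u) ^ (-(α / 2)))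
  rw [mul_assoc, hprod] at hamgm
  nlinarith [mul_le_mul_of_nonneg_left hbernoulli (Real.rpow_nonneg ht.le (-α))]

lemma convexOn_rpow_neg {α : ℝ} (hα : 0 ≤ α) : ConvexOn ℝ (Ioi 0) fun x : ℝ ↦ x ^ (-α) := by
  have hlog : ConvexOn ℝ (Ioi 0) fun x ↦ α * -Real.log x :=
    strictConcaveOn_log_Ioi.concaveOn.neg.smul hα
  have himage : Convex ℝ ((fun x ↦ α * -Real.log x) '' Ioi 0) :=
    (isPreconnected_Ioi.image _ (hlog.continuousOn isOpen_Ioi)).ordConnected.convex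
  refine ((convexOn_exp.subset (subset_univ _) himage).comp hlog
    (Real.exp_monotone.monotoneOn _)).congr fun x hx ↦ ?_
  rw [Function.comp_apply, Real.rpow_def_of_pos hx, mul_neg, mul_neg, mul_comm]

/-- The function `(1 + x)^(-α)`, which is extremal for the lower bound up to a constant: its
weighted second difference with step `δ φ(x)` is of order `δ² / (1 + x)` near `-1`. -/
def endpointPower (α x : ℝ) : ℝ := (1 + x) ^ (-α)

lemma measurable_endpointPower (α : ℝ) : Measurable (endpointPower α) := by
  unfold endpointPower
  fun_prop

lemma convexOn_endpointPower {α : ℝ} (hα : 0 ≤ α) :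
    ConvexOn ℝ (Ioo (-1) 1) (endpointPower α) := by
  refine ((convexOn_rpow_neg hα).translate_right 1).subset (fun x hx ↦ ?_) (convex_Ioo _ _)
  exact neg_lt_iff_pos_add'.1 hx.1

lemma secondDiff_endpointPower (α u x : ℝ) :
    secondDiff (endpointPower α) u x = secondDiff (fun t ↦ t ^ (-α)) u (1 + x) := by
  simp only [secondDiff, endpointPower, add_sub_assoc, add_assoc]

lemma jacobi_mul_endpointPower (α β : ℝ) {x : ℝ} (hx : -1 < x) :
    jacobi α β x * endpointPower α x = (1 - x) ^ β := by
  have hpos : 0 < 1 + x := by linarith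
  rw [jacobi, endpointPower, mul_right_comm, ← Real.rpow_add hpos, add_neg_cancel, Real.rpow_zero,
    one_mul]

lemma mul_inv_le_jacobi_mul_symmDelta {α β δ x : ℝ} (hα : 0 ≤ α) (hβ : 0 ≤ β) (hδ : 0 < δ)
    (hx : x ∈ Icc (-1 + 8 * δ ^ 2) 0) :
    α * δ ^ 2 * (1 + x)⁻¹ ≤ jacobi α β x * symmDelta 2 (δ * phiW x) (endpointPower α) x := by
  obtain ⟨hx₁, hx₂⟩ := hx
  have hpos : 0 < 1 + x := lt_of_lt_of_le (by positivity : 0 < 8 * δ ^ 2) (by linarith)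
  set u := δ * phiW x with hu
  have hu₀ : 0 ≤ u := (mul_phiW_mem_Icc hδ.le le_rfl).1
  have hux : u ≤ (1 + x) / 2 := (mul_phiW_mem_Icc hδ.le le_rfl).2.trans
    (mul_sqrt_two_mul_le_half hpos.le (by linarith))
  have hratio : (u / (1 + x)) ^ 2 = δ ^ 2 * (1 - x) * (1 + x)⁻¹ := by
    rw [hu, div_pow, mul_pow, phiW, Real.sq_sqrt (by nlinarith)]
    field_simp
    ring
  have hdiff : α * (u / (1 + x)) ^ 2 * endpointPower α x ≤ secondDiff (endpointPower α) u x := by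
    rw [secondDiff_endpointPower]
    exact mul_sq_mul_rpow_neg_le_secondDiff hα hpos (by rw [abs_of_nonneg hu₀]; linarith)
  rw [symmDelta_two_eq_secondDiff ⟨by linarith, by linarith⟩ ⟨by linarith, by linarith⟩]
  calc α * δ ^ 2 * (1 + x)⁻¹
      ≤ α * δ ^ 2 * (1 + x)⁻¹ * ((1 - x) * (1 - x) ^ β) :=
        le_mul_of_one_le_right (by positivity) <| one_le_mul_of_one_le_of_one_le (by linarith)
          (Real.one_le_rpow (by linarith) hβ)
    _ = jacobi α β x * (α * (u / (1 + x)) ^ 2 * endpointPower α x) := by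
        rw [hratio, ← jacobi_mul_endpointPower α β (by linarith)]
        ring
    _ ≤ jacobi α β x * secondDiff (endpointPower α) u x := by
        gcongr
        exact (jacobi_pos α β ⟨by linarith, by linarith⟩).le

lemma lintegral_ofReal_inv_one_add {ε : ℝ} (hε₀ : 0 < ε) (hε₁ : ε ≤ 1) :
    ∫⁻ x in Icc (-1 + ε) 0, ENNReal.ofReal (1 + x)⁻¹ = ENNReal.ofReal (-Real.log ε) := by
  have hcont : ContinuousOn (fun x : ℝ ↦ (1 + x)⁻¹) (Icc (-1 + ε) 0) :=
    .inv₀ (by fun_prop) fun x hx ↦ by linarith [hx.1]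
  rw [← ofReal_integral_eq_lintegral_ofReal hcont.integrableOn_Icc]
  · rw [integral_Icc_eq_integral_Ioc, ← intervalIntegral.integral_of_le (by linarith),
      intervalIntegral.integral_comp_add_left (fun x ↦ x⁻¹) 1, add_neg_cancel_left, add_zero,
      integral_inv_of_pos hε₀ one_pos, one_div, Real.log_inv]
  · filter_upwards [ae_restrict_mem measurableSet_Icc] with x hx
    exact inv_nonneg.2 (by linarith [hx.1])

lemma abs_log_le_two_mul_neg_log {δ : ℝ} (hδ₀ : 0 < δ) (hδ₁ : δ < 1 / 4) :
    |Real.log δ| ≤ 2 * -Real.log (8 * δ ^ 2) := by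
  have hlog₂ : Real.log δ ≤ -2 * Real.log 2 := by
    calc Real.log δ ≤ Real.log (2 ^ (-2 : ℤ)) := Real.log_le_log hδ₀ (by norm_num; linarith)
      _ = -2 * Real.log 2 := by rw [Real.log_zpow]; norm_num
  have hlog₈ : Real.log 8 = 3 * Real.log 2 := by
    rw [show (8 : ℝ) = 2 ^ 3 by norm_num, Real.log_pow]
    norm_num
  rw [abs_of_neg (Real.log_neg hδ₀ (by linarith)), Real.log_mul (by norm_num) (by positivity),
    Real.log_pow, hlog₈]
  push_cast
  linarith

lemma le_OmegaMain_endpointPower {α β δ : ℝ} (hα : 0 ≤ α) (hβ : 0 ≤ β) (hδ₀ : 0 < δ)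
    (hδ₁ : δ < 1 / 4) :
    ENNReal.ofReal (α / 2 * δ ^ 2 * |Real.log δ|) ≤
      OmegaMain 2 (endpointPower α) δ (jacobi α β) 1 := by
  have hcoef : 2 * ((2 : ℕ) : ℝ) ^ 2 * δ ^ 2 = 8 * δ ^ 2 := by norm_num
  have hδ_sq : 8 * δ ^ 2 ≤ 1 := by nlinarith
  refine le_iSup₂_of_le δ ⟨hδ₀, le_rfl⟩ ?_
  rw [LpOn, eLpNorm_one_eq_lintegral_enorm, hcoef]
  calc ENNReal.ofReal (α / 2 * δ ^ 2 * |Real.log δ|)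
      ≤ ENNReal.ofReal (α * δ ^ 2 * -Real.log (8 * δ ^ 2)) := by
        refine ENNReal.ofReal_le_ofReal ?_
        nlinarith [abs_log_le_two_mul_neg_log hδ₀ hδ₁, mul_nonneg hα (sq_nonneg δ)]
    _ = ∫⁻ x in Icc (-1 + 8 * δ ^ 2) 0, ENNReal.ofReal (α * δ ^ 2 * (1 + x)⁻¹) := by
        have hnonneg : 0 ≤ α * δ ^ 2 := by positivity
        simp only [ENNReal.ofReal_mul hnonneg]
        rw [lintegral_const_mul _ (by fun_prop),
          lintegral_ofReal_inv_one_add (by positivity) hδ_sq]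
    _ ≤ ∫⁻ x in Icc (-1 + 8 * δ ^ 2) 0,
          ‖jacobi α β x * symmDelta 2 (δ * phiW x) (endpointPower α) x‖ₑ := by
        refine setLIntegral_mono' measurableSet_Icc fun x hx ↦ ?_
        rw [Real.enorm_eq_ofReal_abs]
        exact ENNReal.ofReal_le_ofReal <|
          (mul_inv_le_jacobi_mul_symmDelta hα hβ hδ₀ hx).trans (le_abs_self _)
    _ ≤ ∫⁻ x in Icc (-1 + 8 * δ ^ 2) (1 - 8 * δ ^ 2),
          ‖jacobi α β x * symmDelta 2 (δ * phiW x) (endpointPower α) x‖ₑ :=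
        lintegral_mono_set (Icc_subset_Icc_right (by linarith))

lemma LpOn_const_mul (c : ℝ) (g : ℝ → ℝ) (p : ℝ≥0∞) (a b : ℝ) :
    LpOn (fun x ↦ c * g x) p a b = ‖c‖ₑ * LpOn g p a b :=
  eLpNorm_const_smul c g p _

lemma symmDelta_const_mul (k : ℕ) (h c : ℝ) (f : ℝ → ℝ) (x : ℝ) :
    symmDelta k h (fun y ↦ c * f y) x = c * symmDelta k h f x := by
  simp only [symmDelta, mul_ite, mul_zero, Finset.mul_sum, mul_left_comm c]

lemma OmegaMain_const_mul (k : ℕ) (c : ℝ) (f : ℝ → ℝ) (δ : ℝ) (wt : ℝ → ℝ) (p : ℝ≥0∞) :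
    OmegaMain k (fun x ↦ c * f x) δ wt p = ‖c‖ₑ * OmegaMain k f δ wt p := by
  simp only [OmegaMain, symmDelta_const_mul, mul_left_comm _ c, LpOn_const_mul, ENNReal.mul_iSup]

lemma inv_toReal_mul_mem_BSet {p : ℝ≥0∞} {α β : ℝ} {f : ℝ → ℝ} (hf : Measurable f)
    (hzero : LpOn (fun x ↦ jacobi α β x * f x) p (-1) 1 ≠ 0)
    (htop : LpOn (fun x ↦ jacobi α β x * f x) p (-1) 1 ≠ ⊤) :
    (fun x ↦ (LpOn (fun y ↦ jacobi α β y * f y) p (-1) 1).toReal⁻¹ * f x) ∈ BSet p α β := by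
  refine ⟨hf.const_mul _, ?_⟩
  have hpos := ENNReal.toReal_pos hzero htop
  simp only [mul_left_comm (jacobi α β _), LpOn_const_mul]
  rw [Real.enorm_eq_ofReal (by positivity), ENNReal.ofReal_inv_of_pos hpos,
    ENNReal.ofReal_toReal htop, ENNReal.inv_mul_cancel hzero htop]

lemma LpOn_ne_zero_of_pos {g : ℝ → ℝ} {p : ℝ≥0∞} {a b : ℝ} (hp : p ≠ 0) (hab : a < b)
    (hg : Measurable g) (hpos : ∀ x ∈ Ioo a b, 0 < g x) : LpOn g p a b ≠ 0 := by
  rw [LpOn, Ne, eLpNorm_eq_zero_iff hg.aestronglyMeasurable hp]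
  intro hzero
  have hfalse : ∀ᵐ _ ∂volume.restrict (Ioo a b), False := by
    filter_upwards [ae_restrict_of_ae_restrict_of_subset Ioo_subset_Icc_self hzero,
      ae_restrict_mem measurableSet_Ioo] with x hx hxab
    exact (hpos x hxab).ne' hx
  rw [eventually_false_iff_eq_bot, ae_eq_bot, Measure.restrict_eq_zero, Real.volume_Ioo,
    ENNReal.ofReal_eq_zero] at hfalse
  linarith

lemma LpOn_jacobi_mul_endpointPower_ne_top (α : ℝ) {β : ℝ} (hβ : 0 ≤ β) :
    LpOn (fun x ↦ jacobi α β x * endpointPower α x) ∞ (-1) 1 ≠ ⊤ := by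
  rw [LpOn, eLpNorm_exponent_top]
  refine ne_top_of_le_ne_top ENNReal.ofReal_ne_top
    (eLpNormEssSup_le_of_ae_bound (C := 2 ^ β) ?_)
  rw [← restrict_Ioc_eq_restrict_Icc]
  filter_upwards [ae_restrict_mem measurableSet_Ioc] with x hx
  have hx₂ : 0 ≤ 1 - x := sub_nonneg.2 hx.2
  rw [jacobi_mul_endpointPower α β hx.1, Real.norm_of_nonneg (Real.rpow_nonneg hx₂ _)]
  exact Real.rpow_le_rpow hx₂ (by linarith [hx.1]) hβ

lemma exists_le_omegaDT_of_pos {α β : ℝ} (hα : 0 < α) (hβ : 0 ≤ β) :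
    ∃ c > (0 : ℝ), ∃ f ∈ BSet ∞ α β ∩ MSet 2, ∀ δ : ℝ, 0 < δ → δ < 1 / 4 →
      ENNReal.ofReal (c * δ ^ 2 * |Real.log δ|) ≤ omegaDT 2 f δ (jacobi α β) 1 := by
  set N := LpOn (fun x ↦ jacobi α β x * endpointPower α x) ∞ (-1) 1
  have hmeas := measurable_endpointPower α
  have hzero : N ≠ 0 := LpOn_ne_zero_of_pos ENNReal.top_ne_zero (by norm_num)
    (by unfold jacobi; fun_prop) fun x hx ↦
      mul_pos (jacobi_pos α β hx) (Real.rpow_pos_of_pos (by linarith [hx.1]) _)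
  have htop : N ≠ ⊤ := LpOn_jacobi_mul_endpointPower_ne_top α hβ
  have hN : 0 < N.toReal := ENNReal.toReal_pos hzero htop
  refine ⟨N.toReal⁻¹ * (α / 2), by positivity, fun x ↦ N.toReal⁻¹ * endpointPower α x,
    ⟨inv_toReal_mul_mem_BSet hmeas hzero htop, kMonotoneOn_two_iff_convexOn.2 <|
      (convexOn_endpointPower hα.le).smul (by positivity)⟩, fun δ hδ₀ hδ₁ ↦ ?_⟩
  calc ENNReal.ofReal (N.toReal⁻¹ * (α / 2) * δ ^ 2 * |Real.log δ|)
      = ‖N.toReal⁻¹‖ₑ * ENNReal.ofReal (α / 2 * δ ^ 2 * |Real.log δ|) := by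
        rw [Real.enorm_eq_ofReal (by positivity), ← ENNReal.ofReal_mul (by positivity)]
        ring_nf
    _ ≤ ‖N.toReal⁻¹‖ₑ * OmegaMain 2 (endpointPower α) δ (jacobi α β) 1 := by
        gcongr
        exact le_OmegaMain_endpointPower hα.le hβ hδ₀ hδ₁
    _ = OmegaMain 2 (fun x ↦ N.toReal⁻¹ * endpointPower α x) δ (jacobi α β) 1 :=
        (OmegaMain_const_mul ..).symm
    _ ≤ omegaDT 2 (fun x ↦ N.toReal⁻¹ * endpointPower α x) δ (jacobi α β) 1 :=
        le_self_add.trans le_self_add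

lemma exists_le_omegaDT {α β : ℝ} (hα : 0 ≤ α) (hβ : 0 ≤ β) (hne : ¬(α = 0 ∧ β = 0)) :
    ∃ c > (0 : ℝ), ∃ f ∈ BSet ∞ α β ∩ MSet 2, ∀ δ : ℝ, 0 < δ → δ < 1 / 4 →
      ENNReal.ofReal (c * δ ^ 2 * |Real.log δ|) ≤ omegaDT 2 f δ (jacobi α β) 1 := by
  rcases hα.eq_or_lt with rfl | hα_pos
  · have hβ_pos : 0 < β := hβ.lt_of_ne fun h ↦ hne ⟨rfl, h.symm⟩
    obtain ⟨c, hc, f, ⟨hB, hM⟩, hle⟩ := exists_le_omegaDT_of_pos hβ_pos le_rfl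
    refine ⟨c, hc, fun x ↦ f (-x), ⟨comp_neg_mem_BSet hB, comp_neg_mem_MSet even_two hM⟩,
      fun δ hδ₀ hδ₁ ↦ (hle δ hδ₀ hδ₁).trans_eq ?_⟩
    simpa only [jacobi_neg] using (omegaDT_comp_neg 2 f δ (jacobi β 0) 1).symm
  · exact exists_le_omegaDT_of_pos hα_pos hβ

theorem statement1 (α β : ℝ) (hα : 0 ≤ α) (hβ : 0 ≤ β) (hne : ¬(α = 0 ∧ β = 0)) :
    ∃ c₁ > (0 : ℝ), ∃ c₂ > (0 : ℝ), ∀ δ : ℝ, 0 < δ → δ < 1 / 4 →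
      ENNReal.ofReal (c₁ * δ ^ 2 * |Real.log δ|) ≤
        (⨆ f ∈ BSet ∞ α β ∩ MSet 2, omegaDT 2 f δ (jacobi α β) 1) ∧
      (⨆ f ∈ BSet ∞ α β ∩ MSet 2, omegaDT 2 f δ (jacobi α β) 1) ≤
        ENNReal.ofReal (c₂ * δ ^ 2 * |Real.log δ|) := by
  obtain ⟨c, hc, f, hf, hle⟩ := exists_le_omegaDT hα hβ hne
  refine ⟨c, hc, 2368 * 16 ^ (α + β), by positivity, fun δ hδ₀ hδ₁ ↦ ⟨?_, ?_⟩⟩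
  · exact le_iSup₂_of_le f hf (hle δ hδ₀ hδ₁)
  · exact iSup₂_le fun g hg ↦ (isJacobiBoundedConvex_of_mem hg).omegaDT_le hα hβ hδ₀ hδ₁
end
end

section
/- There exist absolute constants c₁, c₂ > 0 such that for all 0 < δ < 1/4: c₁·δ² ≤ sup_{f ∈ B_∞^{0,0} ∩ M²} ω_φ²(f, δ)_{w_{0,0}, 1} ≤ c₂·δ², where w_{0,0} ≡ 1, i.e., the supremum over all convex functions f on (−1,1) with ‖f‖_∞ = 1 of the unweighted modulus ω_φ²(f, δ)_{1,1} is comparable to δ². -/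
open MeasureTheory Set Filter
open scoped ENNReal

noncomputable section

/-!
With `x = sin θ` and `h = tan η` one has `x ± h φ(x) = sin (θ ± η) / cos η`. The addition formula
`cos (θ - η) + cos (θ + η) = 2 cos η cos θ` therefore gives, up to boundary terms,
`∫ f(x - hφ(x)) + f(x + hφ(x)) dx = 2 cos² η ∫ f`, and `1 - cos² η ≤ h²`. The boundary terms live on
`θ`-intervals of length `2η` near `±arcsin (1 - 8h²)`, where the Jacobian `cos θ` is `O(h)`. So the
integral of the second difference of any bounded continuous function is `O(h²)`; for a convex
function the second difference is nonnegative, and that integral is its `L¹` norm. The two end parts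
of the modulus are trivial, and `x² - 1` gives the lower bound.
-/

section SupNorm

theorem enorm_le_eLpNorm_top_of_continuousOn {X E : Type*} [TopologicalSpace X] [MeasurableSpace X]
    [NormedAddCommGroup E] {μ : Measure X} [μ.IsOpenPosMeasure] {f : X → E} {U : Set X}
    (hU : IsOpen U) (hf : ContinuousOn f U) {x : X} (hx : x ∈ U) :
    ‖f x‖ₑ ≤ eLpNorm f ∞ (μ.restrict U) := by
  set N := eLpNorm f ∞ (μ.restrict U)
  have hmax : (fun y => max ‖f y‖ₑ N) =ᵐ[μ.restrict U] fun _ => N :=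
    (enorm_ae_le_eLpNormEssSup f _).mono fun y hy => max_eq_right hy
  exact max_eq_right_iff.mp <|
    Measure.eqOn_open_of_ae_eq hmax hU (hf.enorm.sup continuousOn_const) continuousOn_const hx

theorem jacobi_zero_zero (x : ℝ) : jacobi 0 0 x = 1 := by simp [jacobi]

theorem mem_BSet_top_zero_iff {f : ℝ → ℝ} :
    f ∈ BSet ∞ 0 0 ↔ Measurable f ∧ LpOn f ∞ (-1) 1 = 1 := by
  simp only [BSet, jacobi_zero_zero, one_mul, mem_ofPred_eq]

theorem enorm_le_LpOn_top {f : ℝ → ℝ} {a b x : ℝ} (hf : ContinuousOn f (Ioo a b))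
    (hx : x ∈ Ioo a b) : ‖f x‖ₑ ≤ LpOn f ∞ a b :=
  (enorm_le_eLpNorm_top_of_continuousOn isOpen_Ioo hf hx).trans <|
    eLpNorm_mono_measure f (Measure.restrict_mono Ioo_subset_Icc_self le_rfl)

theorem abs_le_one_of_mem_BSet_top {f : ℝ → ℝ} (hB : f ∈ BSet ∞ 0 0)
    (hf : ContinuousOn f (Ioo (-1) 1)) : ∀ x ∈ Ioo (-1 : ℝ) 1, |f x| ≤ 1 := by
  intro x hx
  have h := enorm_le_LpOn_top hf hx
  rwa [(mem_BSet_top_zero_iff.mp hB).2, Real.enorm_eq_ofReal_abs, ENNReal.ofReal_le_one] at h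

end SupNorm

section KMonotone

theorem sum_div_prod_erase_three (f : ℝ → ℝ) {x : Fin 3 → ℝ} (hx : Function.Injective x) :
    ∑ i, f (x i) / ∏ j ∈ Finset.univ.erase i, (x i - x j) =
      (slope f (x 0) (x 2) - slope f (x 0) (x 1)) / (x 2 - x 1) := by
  have h01 : x 0 - x 1 ≠ 0 := sub_ne_zero.mpr (hx.ne (by decide))
  have h02 : x 0 - x 2 ≠ 0 := sub_ne_zero.mpr (hx.ne (by decide))
  have h12 : x 1 - x 2 ≠ 0 := sub_ne_zero.mpr (hx.ne (by decide))
  have erase_zero : Finset.univ.erase (0 : Fin 3) = {1, 2} := by decide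
  have erase_one : Finset.univ.erase (1 : Fin 3) = {0, 2} := by decide
  have erase_two : Finset.univ.erase (2 : Fin 3) = {0, 1} := by decide
  rw [Fin.sum_univ_three, erase_zero, erase_one, erase_two, Finset.prod_pair (by decide),
    Finset.prod_pair (by decide), Finset.prod_pair (by decide), slope_def_field, slope_def_field,
    ← neg_sub (x 0) (x 1), ← neg_sub (x 0) (x 2), ← neg_sub (x 1) (x 2)]
  field_simp
  ring

theorem convexOn_of_kMonotoneOn_two {f : ℝ → ℝ} (hf : kMonotoneOn 2 f) :
    ConvexOn ℝ (Ioo (-1) 1) f := by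
  refine convexOn_of_slope_mono_adjacent (convex_Ioo _ _) fun {x y z} hx hz hxy hyz => ?_
  have hy : y ∈ Ioo (-1 : ℝ) 1 := ⟨hx.1.trans hxy, hyz.trans hz.2⟩
  have hinj : Function.Injective ![y, x, z] := by
    intro i j hij
    fin_cases i <;> fin_cases j <;> simp_all [hxy.ne, hxy.ne', hyz.ne, hyz.ne',
      (hxy.trans hyz).ne, (hxy.trans hyz).ne']
  have hmem : ∀ i, ![y, x, z] i ∈ Ioo (-1 : ℝ) 1 := by
    simp [Fin.forall_fin_succ, hx.1, hx.2, hy.1, hy.2, hz.1, hz.2]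
  have hdd : 0 ≤ (slope f y z - slope f y x) / (z - x) :=
    (hf _ hinj hmem).trans_eq (sum_div_prod_erase_three f hinj)
  have hslope : slope f y x ≤ slope f y z :=
    not_lt.mp fun hlt => hdd.not_gt <|
      div_neg_of_neg_of_pos (sub_neg.mpr hlt) (sub_pos.mpr (hxy.trans hyz))
  rwa [slope_comm, slope_def_field, slope_def_field] at hslope

theorem kMonotoneOn_two_of_convexOn {f : ℝ → ℝ} (hf : ConvexOn ℝ (Ioo (-1) 1) f) :
    kMonotoneOn 2 f := by
  intro x hx hmem
  have hmono : MonotoneOn (slope f (x 0)) (Ioo (-1) 1 \ {x 0}) := hf.slope_mono (hmem 0)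
  have h1 : x 1 ∈ Ioo (-1) 1 \ {x 0} := ⟨hmem 1, hx.ne (by decide)⟩
  have h2 : x 2 ∈ Ioo (-1) 1 \ {x 0} := ⟨hmem 2, hx.ne (by decide)⟩
  rw [sum_div_prod_erase_three f hx]
  rcases le_total (x 1) (x 2) with h | h
  · exact div_nonneg (sub_nonneg.mpr (hmono h1 h2 h)) (sub_nonneg.mpr h)
  · exact div_nonneg_of_nonpos (sub_nonpos.mpr (hmono h2 h1 h)) (sub_nonpos.mpr h)

end KMonotone

section SymmDelta

theorem symmDelta_two {f : ℝ → ℝ} {x s : ℝ} (hl : x - s ∈ Icc (-1 : ℝ) 1)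
    (hr : x + s ∈ Icc (-1 : ℝ) 1) :
    symmDelta 2 s f x = f (x - s) + f (x + s) - 2 * f x := by
  have hs : ((2 : ℕ) : ℝ) * s / 2 = s := by push_cast; ring
  have hr' : x - s + 2 * s = x + s := by ring
  rw [symmDelta, hs, if_pos ⟨hl, hr⟩]
  simp only [Finset.sum_range_succ, Finset.sum_range_zero, Nat.choose_zero_right, Nat.choose_self,
    Nat.choose_one_right, Nat.cast_zero, Nat.cast_one, Nat.cast_ofNat, zero_mul, one_mul, add_zero,
    sub_add_cancel, hr']
  ring

theorem abs_symmDelta_le {f : ℝ → ℝ} {M : ℝ} (hM : ∀ x ∈ Ioo (-1 : ℝ) 1, |f x| ≤ M) (k : ℕ)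
    {h x : ℝ} (hh : 0 ≤ h) (hl : x - k * h / 2 ≠ -1) (hr : x + k * h / 2 ≠ 1) :
    |symmDelta k h f x| ≤ 2 ^ k * M := by
  have hM0 : 0 ≤ M := (abs_nonneg _).trans (hM 0 (by norm_num))
  rw [symmDelta]
  split_ifs with hx
  · have hleft : -1 < x - k * h / 2 := lt_of_le_of_ne hx.1.1 hl.symm
    have hright : x + k * h / 2 < 1 := lt_of_le_of_ne hx.2.2 hr
    have hnode : ∀ i ∈ Finset.range (k + 1), x - k * h / 2 + i * h ∈ Ioo (-1 : ℝ) 1 := by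
      intro i hi
      have hik : (i : ℝ) * h ≤ k * h := by
        gcongr
        exact Nat.lt_succ_iff.mp (Finset.mem_range.mp hi)
      have hi0 : 0 ≤ (i : ℝ) * h := by positivity
      constructor <;> linarith
    calc _ ≤ ∑ i ∈ Finset.range (k + 1), (k.choose i : ℝ) * M := by
          refine Finset.abs_sum_le_sum_abs _ _ |>.trans (Finset.sum_le_sum fun i hi => ?_)
          rw [abs_mul, abs_mul, abs_pow, abs_neg, abs_one, one_pow, mul_one, Nat.abs_cast]
          gcongr
          exact hM _ (hnode i hi)
      _ = 2 ^ k * M := by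
          rw [← Finset.sum_mul]
          exact_mod_cast congrArg (fun n : ℕ => (n : ℝ) * M) (Nat.sum_range_choose k)
  · rw [abs_zero]
    positivity

theorem secondDiff_nonneg_of_convexOn {f : ℝ → ℝ} {S : Set ℝ} (hf : ConvexOn ℝ S f) {x s : ℝ}
    (hl : x - s ∈ S) (hr : x + s ∈ S) : 0 ≤ f (x - s) + f (x + s) - 2 * f x := by
  have hmid := hf.2 hl hr (by norm_num : (0 : ℝ) ≤ 1 / 2) (by norm_num : (0 : ℝ) ≤ 1 / 2)
    (by norm_num)
  have hx : (1 / 2 : ℝ) • (x - s) + (1 / 2 : ℝ) • (x + s) = x := by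
    simp only [smul_eq_mul]
    ring
  rw [hx, smul_eq_mul, smul_eq_mul] at hmid
  linarith

end SymmDelta

section EndParts

theorem LpOn_one_le {g : ℝ → ℝ} {C a b : ℝ} (hC : 0 ≤ C)
    (hg : ∀ᵐ x ∂volume.restrict (Icc a b), ‖g x‖ ≤ C) :
    LpOn g 1 a b ≤ ENNReal.ofReal (C * (b - a)) := by
  refine (eLpNorm_le_of_ae_bound hg).trans_eq ?_
  rw [Measure.restrict_apply_univ, Real.volume_Icc, ENNReal.toReal_one, inv_one, ENNReal.rpow_one,
    mul_comm, ENNReal.ofReal_mul hC]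

variable {f : ℝ → ℝ} {M : ℝ}

theorem OmegaFwd_one_le (hM : ∀ x ∈ Ioo (-1 : ℝ) 1, |f x| ≤ M) (k : ℕ) (δ : ℝ) :
    OmegaFwd k f δ (jacobi 0 0) 1 ≤ ENNReal.ofReal (2 ^ k * M * (2 * k ^ 2 * δ ^ 2)) := by
  have hM0 : 0 ≤ M := (abs_nonneg _).trans (hM 0 (by norm_num))
  refine iSup₂_le fun h hh => ?_
  have hae : ∀ᵐ x ∂volume.restrict (Icc (-1 : ℝ) (-1 + 2 * k ^ 2 * δ ^ 2)),
      ‖jacobi 0 0 x * symmDelta k h f (x + k * h / 2)‖ ≤ 2 ^ k * M := by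
    filter_upwards [ae_restrict_of_ae (Measure.ae_ne volume (-1)),
      ae_restrict_of_ae (Measure.ae_ne volume (1 - k * h))] with x hleft hright
    rw [jacobi_zero_zero, one_mul]
    exact abs_symmDelta_le hM k hh.1.le (fun h' => hleft (by linarith))
      (fun h' => hright (by linarith))
  exact (LpOn_one_le (by positivity) hae).trans_eq (by ring_nf)

theorem OmegaBwd_one_le (hM : ∀ x ∈ Ioo (-1 : ℝ) 1, |f x| ≤ M) (k : ℕ) (δ : ℝ) :
    OmegaBwd k f δ (jacobi 0 0) 1 ≤ ENNReal.ofReal (2 ^ k * M * (2 * k ^ 2 * δ ^ 2)) := by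
  have hM0 : 0 ≤ M := (abs_nonneg _).trans (hM 0 (by norm_num))
  refine iSup₂_le fun h hh => ?_
  have hae : ∀ᵐ x ∂volume.restrict (Icc (1 - 2 * k ^ 2 * δ ^ 2) (1 : ℝ)),
      ‖jacobi 0 0 x * symmDelta k h f (x - k * h / 2)‖ ≤ 2 ^ k * M := by
    filter_upwards [ae_restrict_of_ae (Measure.ae_ne volume (-1 + k * h)),
      ae_restrict_of_ae (Measure.ae_ne volume 1)] with x hleft hright
    rw [jacobi_zero_zero, one_mul]
    exact abs_symmDelta_le hM k hh.1.le (fun h' => hleft (by linarith))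
      (fun h' => hright (by linarith))
  exact (LpOn_one_le (by positivity) hae).trans_eq (by ring_nf)

end EndParts

section Phi

theorem phiW_nonneg (x : ℝ) : 0 ≤ phiW x := Real.sqrt_nonneg _

theorem phiW_sq {x : ℝ} (hx : |x| ≤ 1) : phiW x ^ 2 = 1 - x ^ 2 :=
  Real.sq_sqrt (sub_nonneg.mpr ((sq_le_one_iff_abs_le_one x).mpr hx))

@[fun_prop]
theorem continuous_phiW : Continuous phiW := by unfold phiW; fun_prop

theorem phiW_sin {θ : ℝ} (hθ : θ ∈ Icc (-(Real.pi / 2)) (Real.pi / 2)) :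
    phiW (Real.sin θ) = Real.cos θ :=
  (Real.cos_eq_sqrt_one_sub_sin_sq hθ.1 hθ.2).symm

theorem mul_phiW_le {h x : ℝ} (hx : |x| ≤ 1 - 8 * h ^ 2) : h * phiW x ≤ (1 - |x|) / 2 := by
  have hh : 0 ≤ h ^ 2 := sq_nonneg h
  have hx1 : |x| ≤ 1 := by linarith
  refine abs_le_of_sq_le_sq' ?_ (by linarith) |>.2
  rw [mul_pow, phiW_sq hx1, ← sq_abs x]
  nlinarith [abs_nonneg x]

theorem mul_phiW_one_sub_le {h : ℝ} (hh : 0 ≤ 1 - 8 * h ^ 2) :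
    h * phiW (1 - 8 * h ^ 2) ≤ 4 * h ^ 2 := by
  refine (mul_phiW_le (abs_of_nonneg hh).le).trans_eq ?_
  rw [abs_of_nonneg hh]
  ring

theorem sub_add_mul_phiW_mem_Icc {h x : ℝ} (hh : 0 ≤ h) (hx : |x| ≤ 1 - 8 * h ^ 2) :
    x - h * phiW x ∈ Icc (-(1 - 4 * h ^ 2)) (1 - 4 * h ^ 2) ∧
      x + h * phiW x ∈ Icc (-(1 - 4 * h ^ 2)) (1 - 4 * h ^ 2) := by
  have hs : h * phiW x ≤ (1 - |x|) / 2 := mul_phiW_le hx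
  have hs0 : 0 ≤ h * phiW x := mul_nonneg hh (phiW_nonneg x)
  have hxl := neg_abs_le x
  have hxu := le_abs_self x
  refine ⟨⟨?_, ?_⟩, ?_, ?_⟩ <;> linarith

end Phi

section TrigSubstitution

open Real (sin cos tan arcsin arctan)

theorem integral_comp_add_tan_mul_phiW {f : ℝ → ℝ} (hf : Continuous f) {A η : ℝ}
    (hA : A ∈ Icc 0 (Real.pi / 2)) (hη : cos η ≠ 0) :
    ∫ x in -sin A..sin A, f (x + tan η * phiW x) =
      ∫ θ in -A + η..A + η, f (sin θ / cos η) * cos (θ - η) := by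
  calc ∫ x in -sin A..sin A, f (x + tan η * phiW x)
      = ∫ θ in -A..A, f (sin θ + tan η * phiW (sin θ)) * cos θ := by
        rw [← Real.sin_neg]
        exact (intervalIntegral.integral_comp_mul_deriv (g := fun x => f (x + tan η * phiW x))
          (fun θ _ => Real.hasDerivAt_sin θ) Real.continuous_cos.continuousOn (by fun_prop)).symm
    _ = ∫ θ in -A..A, f (sin (θ + η) / cos η) * cos (θ + η - η) := by
        refine intervalIntegral.integral_congr fun θ hθ => ?_
        rw [uIcc_of_le (by linarith [hA.1])] at hθ
        have hφ : phiW (sin θ) = cos θ :=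
          phiW_sin ⟨by linarith [hθ.1, hA.2], by linarith [hθ.2, hA.2]⟩
        have hadd : sin θ + tan η * cos θ = sin (θ + η) / cos η := by
          rw [Real.sin_add, Real.tan_eq_sin_div_cos]
          field_simp
        simp only [hφ, hadd, add_sub_cancel_right]
    _ = ∫ θ in -A + η..A + η, f (sin θ / cos η) * cos (θ - η) :=
        intervalIntegral.integral_comp_add_right (fun θ => f (sin θ / cos η) * cos (θ - η)) η

theorem integral_comp_sin_div_mul_cos {f : ℝ → ℝ} (hf : Continuous f) {c : ℝ} (hc : c ≠ 0)
    (a b : ℝ) :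
    ∫ θ in a..b, f (sin θ / c) * cos θ = c * ∫ x in sin a / c..sin b / c, f x := by
  rw [← intervalIntegral.integral_comp_mul_deriv (fun θ _ => (Real.hasDerivAt_sin θ).div_const c)
    (Real.continuous_cos.div_const c).continuousOn hf, ← intervalIntegral.integral_const_mul]
  refine intervalIntegral.integral_congr fun θ _ => ?_
  simp only [Function.comp_apply]
  field_simp

theorem integral_mul_cos_sub_add_integral_mul_cos_add {G : ℝ → ℝ} (hG : Continuous G) (A η : ℝ) :
    (∫ θ in -A + η..A + η, G θ * cos (θ - η)) + ∫ θ in -A - η..A - η, G θ * cos (θ + η) =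
      2 * cos η * (∫ θ in -(A - η)..A - η, G θ * cos θ) +
        ∫ θ in A - η..A + η, (G θ + G (-θ)) * cos (θ - η) := by
  have hcont_sub : Continuous fun θ => G θ * cos (θ - η) := by fun_prop
  have hcont_add : Continuous fun θ => G θ * cos (θ + η) := by fun_prop
  have hcont_neg : Continuous fun θ => G (-θ) * cos (θ - η) := by fun_prop
  have hsplit_sub := intervalIntegral.integral_add_adjacent_intervals (μ := volume)
    (hcont_sub.intervalIntegrable (-A + η) (A - η)) (hcont_sub.intervalIntegrable (A - η) (A + η))
  have hsplit_add := intervalIntegral.integral_add_adjacent_intervals (μ := volume)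
    (hcont_add.intervalIntegrable (-A - η) (-A + η)) (hcont_add.intervalIntegrable (-A + η) (A - η))
  have hinner : (∫ θ in -A + η..A - η, G θ * cos (θ - η)) +
      ∫ θ in -A + η..A - η, G θ * cos (θ + η) =
        2 * cos η * ∫ θ in -(A - η)..A - η, G θ * cos θ := by
    rw [← intervalIntegral.integral_add (hcont_sub.intervalIntegrable _ _)
      (hcont_add.intervalIntegrable _ _), ← intervalIntegral.integral_const_mul, neg_sub',
      sub_neg_eq_add]
    refine intervalIntegral.integral_congr fun θ _ => ?_
    simp only [Real.cos_sub, Real.cos_add]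
    ring
  have hreflect : ∫ θ in -A - η..-A + η, G θ * cos (θ + η) =
      ∫ θ in A - η..A + η, G (-θ) * cos (θ - η) := by
    have hneg := intervalIntegral.integral_comp_neg (a := A - η) (b := A + η)
      fun θ => G θ * cos (θ + η)
    rw [neg_add', neg_sub', sub_neg_eq_add] at hneg
    rw [← hneg]
    refine intervalIntegral.integral_congr fun θ _ => ?_
    simp only [← Real.cos_neg (θ - η), neg_sub', sub_neg_eq_add]
  have houter : ∫ θ in A - η..A + η, (G θ + G (-θ)) * cos (θ - η) =
      (∫ θ in A - η..A + η, G θ * cos (θ - η)) + ∫ θ in A - η..A + η, G (-θ) * cos (θ - η) := by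
    simp only [add_mul]
    exact intervalIntegral.integral_add (hcont_sub.intervalIntegrable _ _)
      (hcont_neg.intervalIntegrable _ _)
  linarith

variable {f : ℝ → ℝ} {M : ℝ}

theorem integral_comp_sub_add_integral_comp_add (hf : Continuous f) {A η : ℝ}
    (hA : A ∈ Icc 0 (Real.pi / 2)) (hη : cos η ≠ 0) :
    (∫ x in -sin A..sin A, f (x - tan η * phiW x)) +
        ∫ x in -sin A..sin A, f (x + tan η * phiW x) =
      2 * cos η ^ 2 * (∫ x in -(sin A - tan η * cos A)..sin A - tan η * cos A, f x) +
        ∫ θ in A - η..A + η, (f (sin θ / cos η) + f (-(sin θ / cos η))) * cos (θ - η) := by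
  have hminus : ∫ x in -sin A..sin A, f (x - tan η * phiW x) =
      ∫ θ in -A - η..A - η, f (sin θ / cos η) * cos (θ + η) := by
    have h := integral_comp_add_tan_mul_phiW hf hA (η := -η) (by rwa [Real.cos_neg])
    simpa only [Real.tan_neg, Real.cos_neg, neg_mul, ← sub_eq_add_neg, sub_neg_eq_add] using h
  have hend : sin (A - η) / cos η = sin A - tan η * cos A := by
    rw [Real.sin_sub, Real.tan_eq_sin_div_cos]
    field_simp
  have hG : Continuous fun θ => f (sin θ / cos η) := by fun_prop
  rw [hminus, integral_comp_add_tan_mul_phiW hf hA hη, add_comm,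
    integral_mul_cos_sub_add_integral_mul_cos_add hG, integral_comp_sin_div_mul_cos hf hη,
    Real.sin_neg, neg_div, hend]
  simp only [Real.sin_neg, neg_div]
  ring

theorem abs_integral_boundary_le (hM : ∀ x, |f x| ≤ M) {A η : ℝ} (hA : 0 ≤ cos A) (hη : 0 ≤ η) :
    |∫ θ in A - η..A + η, (f (sin θ / cos η) + f (-(sin θ / cos η))) * cos (θ - η)| ≤
      4 * M * η * (cos A + 2 * η) := by
  have hM0 : 0 ≤ M := (abs_nonneg _).trans (hM 0)
  have hbound : ∀ θ ∈ uIoc (A - η) (A + η),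
      ‖(f (sin θ / cos η) + f (-(sin θ / cos η))) * cos (θ - η)‖ ≤ 2 * M * (cos A + 2 * η) := by
    intro θ hθ
    rw [uIoc_of_le (by linarith)] at hθ
    have hcos : |cos (θ - η)| ≤ cos A + 2 * η := by
      have hdist : |θ - η - A| ≤ 2 * η := abs_le.mpr ⟨by linarith [hθ.1], by linarith [hθ.2]⟩
      calc |cos (θ - η)| ≤ |cos A| + |cos (θ - η) - cos A| := by
            linarith [abs_sub_abs_le_abs_sub (cos (θ - η)) (cos A)]
        _ ≤ cos A + 2 * η := by
            rw [abs_of_nonneg hA]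
            gcongr
            exact (Real.abs_cos_sub_cos_le _ _).trans hdist
    have hsum : |f (sin θ / cos η) + f (-(sin θ / cos η))| ≤ 2 * M := by
      linarith [abs_add_le (f (sin θ / cos η)) (f (-(sin θ / cos η))), hM (sin θ / cos η),
        hM (-(sin θ / cos η))]
    rw [norm_mul, Real.norm_eq_abs, Real.norm_eq_abs]
    gcongr
  refine (intervalIntegral.norm_integral_le_of_norm_le_const hbound).trans_eq ?_
  rw [abs_of_nonneg (by linarith)]
  ring

theorem abs_intervalIntegral_le (hM : ∀ x, |f x| ≤ M) (a b : ℝ) :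
    |∫ x in a..b, f x| ≤ M * |b - a| :=
  intervalIntegral.norm_integral_le_of_norm_le_const (f := f) fun x _ => hM x

theorem abs_integral_shrink_sub_integral_le (hf : Continuous f) (hM : ∀ x, |f x| ≤ M) (a : ℝ)
    {e : ℝ} (he : 0 ≤ e) :
    |(∫ x in -(a - e)..a - e, f x) - ∫ x in -a..a, f x| ≤ 2 * M * e := by
  have hint : ∀ p q : ℝ, IntervalIntegrable f volume p q := fun p q => hf.intervalIntegrable p q
  have hleft : |∫ x in -(a - e)..-a, f x| ≤ M * |-a - -(a - e)| :=
    abs_intervalIntegral_le hM _ _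
  have hright : |∫ x in a - e..a, f x| ≤ M * |a - (a - e)| := abs_intervalIntegral_le hM _ _
  rw [neg_sub_neg, sub_sub_cancel_left, abs_neg, abs_of_nonneg he] at hleft
  rw [sub_sub_cancel, abs_of_nonneg he] at hright
  rw [intervalIntegral.integral_interval_sub_interval_comm (hint _ _) (hint _ _) (hint _ _)]
  linarith [abs_sub (∫ x in -(a - e)..-a, f x) (∫ x in a - e..a, f x)]

theorem one_sub_cos_sq_le_tan_sq {η : ℝ} (hη : cos η ≠ 0) : 1 - cos η ^ 2 ≤ tan η ^ 2 := by
  rw [← Real.sin_sq, ← Real.tan_mul_cos hη, mul_pow]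
  exact mul_le_of_le_one_right (sq_nonneg _) (Real.cos_sq_le_one η)

theorem abs_integral_secondDiff_le_of_tan (hf : Continuous f) (hM : ∀ x, |f x| ≤ M) {A η : ℝ}
    (hA : A ∈ Icc 0 (Real.pi / 2)) (hη : η ∈ Ico 0 (Real.pi / 2)) :
    |(∫ x in -sin A..sin A, f (x - tan η * phiW x)) +
        (∫ x in -sin A..sin A, f (x + tan η * phiW x)) - 2 * ∫ x in -sin A..sin A, f x| ≤
      M * (12 * tan η ^ 2 + 8 * (tan η * cos A)) := by
  have hM0 : 0 ≤ M := (abs_nonneg _).trans (hM 0)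
  have hcosA : 0 ≤ cos A := Real.cos_nonneg_of_mem_Icc ⟨by linarith [hA.1, hA.2], hA.2⟩
  have hcosη : 0 < cos η := Real.cos_pos_of_mem_Ioo ⟨by linarith [hη.1, hη.2], hη.2⟩
  have hη_le : η ≤ tan η := Real.le_tan hη.1 hη.2
  have htan : 0 ≤ tan η := hη.1.trans hη_le
  have hsin_sq : 1 - cos η ^ 2 ≤ tan η ^ 2 := one_sub_cos_sq_le_tan_sq hcosη.ne'
  rw [integral_comp_sub_add_integral_comp_add hf hA hcosη.ne']
  set J := ∫ x in -sin A..sin A, f x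
  set K := ∫ x in -(sin A - tan η * cos A)..sin A - tan η * cos A, f x
  set D := ∫ θ in A - η..A + η, (f (sin θ / cos η) + f (-(sin θ / cos η))) * cos (θ - η)
  have hJ : |J| ≤ 2 * M := by
    have hsinA : 0 ≤ sin A := Real.sin_nonneg_of_nonneg_of_le_pi hA.1 (by linarith [hA.1, hA.2])
    refine (abs_intervalIntegral_le hM _ _).trans ?_
    rw [abs_of_nonneg (by linarith)]
    nlinarith [Real.sin_le_one A]
  have hKJ : |K - J| ≤ 2 * M * (tan η * cos A) :=
    abs_integral_shrink_sub_integral_le hf hM _ (by positivity)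
  have hD : |D| ≤ 4 * M * tan η * (cos A + 2 * tan η) :=
    (abs_integral_boundary_le hM hcosA hη.1).trans (by have := hη.1; gcongr)
  calc |2 * cos η ^ 2 * K + D - 2 * J|
      = |2 * (cos η ^ 2 * (K - J)) - 2 * ((1 - cos η ^ 2) * J) + D| := by ring_nf
    _ ≤ 2 * (cos η ^ 2 * |K - J|) + 2 * ((1 - cos η ^ 2) * |J|) + |D| := by
        refine (abs_add_le _ _).trans (add_le_add_left ((abs_sub _ _).trans_eq ?_) _)
        simp only [abs_mul, abs_two, abs_of_nonneg (sq_nonneg (cos η)),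
          abs_of_nonneg (sub_nonneg.mpr (Real.cos_sq_le_one η))]
    _ ≤ 2 * (1 * (2 * M * (tan η * cos A))) + 2 * (tan η ^ 2 * (2 * M)) +
          4 * M * tan η * (cos A + 2 * tan η) := by
        gcongr
        exact Real.cos_sq_le_one η
    _ = M * (12 * tan η ^ 2 + 8 * (tan η * cos A)) := by ring

theorem abs_integral_secondDiff_le (hf : Continuous f) (hM : ∀ x, |f x| ≤ M) {a h : ℝ}
    (ha : a ∈ Icc (0 : ℝ) 1) (hh : 0 ≤ h) :
    |∫ x in -a..a, (f (x - h * phiW x) + f (x + h * phiW x) - 2 * f x)| ≤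
      M * (12 * h ^ 2 + 8 * (h * phiW a)) := by
  have hint : ∀ {g : ℝ → ℝ}, Continuous g → IntervalIntegrable g volume (-a) a :=
    fun hg => hg.intervalIntegrable _ _
  have hsin : sin (arcsin a) = a := Real.sin_arcsin (by linarith [ha.1]) ha.2
  have hcos : cos (arcsin a) = phiW a := Real.cos_arcsin a
  have key := abs_integral_secondDiff_le_of_tan hf hM
    ⟨Real.arcsin_nonneg.mpr ha.1, Real.arcsin_le_pi_div_two a⟩
    ⟨Real.arctan_nonneg.mpr hh, Real.arctan_lt_pi_div_two h⟩
  rw [hsin, hcos, Real.tan_arctan] at key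
  rwa [intervalIntegral.integral_sub (hint (by fun_prop)) (hint (by fun_prop)),
    intervalIntegral.integral_add (hint (by fun_prop)) (hint (by fun_prop)),
    intervalIntegral.integral_const_mul]

end TrigSubstitution

section MainPart

variable {f : ℝ → ℝ} {M : ℝ}

theorem exists_continuous_eqOn_Icc {a b : ℝ} (hab : a ≤ b) (hf : ContinuousOn f (Icc a b))
    (hM : ∀ x ∈ Icc a b, |f x| ≤ M) :
    ∃ g : ℝ → ℝ, Continuous g ∧ (∀ x, |g x| ≤ M) ∧ EqOn g f (Icc a b) :=
  ⟨IccExtend hab ((Icc a b).domRestrict f), hf.domRestrict.Icc_extend',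
    fun x => hM _ (projIcc a b hab x).2, fun _ hx => IccExtend_of_mem hab _ hx⟩

theorem LpOn_secondDiff_eq (hf : Continuous f) {a h : ℝ} (ha : 0 ≤ a)
    (hnonneg : ∀ x ∈ Icc (-a) a, 0 ≤ f (x - h * phiW x) + f (x + h * phiW x) - 2 * f x) :
    LpOn (fun x => f (x - h * phiW x) + f (x + h * phiW x) - 2 * f x) 1 (-a) a =
      ENNReal.ofReal (∫ x in -a..a, (f (x - h * phiW x) + f (x + h * phiW x) - 2 * f x)) := by
  have hcont : Continuous fun x => f (x - h * phiW x) + f (x + h * phiW x) - 2 * f x := by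
    fun_prop
  rw [LpOn, eLpNorm_one_eq_lintegral_enorm, intervalIntegral.integral_of_le (by linarith),
    ← integral_Icc_eq_integral_Ioc,
    ofReal_integral_eq_lintegral_ofReal hcont.continuousOn.integrableOn_Icc
      ((ae_restrict_mem measurableSet_Icc).mono hnonneg)]
  exact setLIntegral_congr_fun measurableSet_Icc fun x hx =>
    Real.enorm_of_nonneg (hnonneg x hx)

theorem LpOn_symmDelta_two_le (hconv : ConvexOn ℝ (Ioo (-1) 1) f)
    (hM : ∀ x ∈ Ioo (-1 : ℝ) 1, |f x| ≤ M) {h : ℝ} (hh : 0 < h) (ha : 0 ≤ 1 - 8 * h ^ 2) :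
    LpOn (fun x => symmDelta 2 (h * phiW x) f x) 1 (-(1 - 8 * h ^ 2)) (1 - 8 * h ^ 2) ≤
      ENNReal.ofReal (44 * M * h ^ 2) := by
  have hh2 : 0 < h ^ 2 := by positivity
  have hM0 : 0 ≤ M := (abs_nonneg _).trans (hM 0 (by norm_num))
  have hsub : Icc (-(1 - 4 * h ^ 2)) (1 - 4 * h ^ 2) ⊆ Ioo (-1) 1 :=
    Icc_subset_Ioo (by linarith) (by linarith)
  obtain ⟨g, hg, hgM, hgf⟩ := exists_continuous_eqOn_Icc (by linarith)
    ((hconv.continuousOn isOpen_Ioo).mono hsub) fun x hx => hM x (hsub hx)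
  have hdelta : ∀ x ∈ Icc (-(1 - 8 * h ^ 2)) (1 - 8 * h ^ 2), symmDelta 2 (h * phiW x) f x =
      g (x - h * phiW x) + g (x + h * phiW x) - 2 * g x ∧
        0 ≤ g (x - h * phiW x) + g (x + h * phiW x) - 2 * g x := by
    intro x hx
    obtain ⟨hl, hr⟩ := sub_add_mul_phiW_mem_Icc hh.le (abs_le.mpr hx)
    have hx' : x ∈ Icc (-(1 - 4 * h ^ 2)) (1 - 4 * h ^ 2) :=
      ⟨by linarith [hx.1], by linarith [hx.2]⟩
    rw [hgf hl, hgf hr, hgf hx']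
    exact ⟨symmDelta_two (Ioo_subset_Icc_self (hsub hl)) (Ioo_subset_Icc_self (hsub hr)),
      secondDiff_nonneg_of_convexOn hconv (hsub hl) (hsub hr)⟩
  have hφ : h * phiW (1 - 8 * h ^ 2) ≤ 4 * h ^ 2 := mul_phiW_one_sub_le ha
  calc LpOn (fun x => symmDelta 2 (h * phiW x) f x) 1 (-(1 - 8 * h ^ 2)) (1 - 8 * h ^ 2)
      = LpOn (fun x => g (x - h * phiW x) + g (x + h * phiW x) - 2 * g x) 1
          (-(1 - 8 * h ^ 2)) (1 - 8 * h ^ 2) :=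
        eLpNorm_congr_ae ((ae_restrict_mem measurableSet_Icc).mono fun x hx => (hdelta x hx).1)
    _ = _ := LpOn_secondDiff_eq hg ha fun x hx => (hdelta x hx).2
    _ ≤ ENNReal.ofReal (M * (12 * h ^ 2 + 8 * (h * phiW (1 - 8 * h ^ 2)))) :=
        ENNReal.ofReal_le_ofReal <| (le_abs_self _).trans <|
          abs_integral_secondDiff_le hg hgM ⟨ha, by linarith⟩ hh.le
    _ ≤ ENNReal.ofReal (44 * M * h ^ 2) := ENNReal.ofReal_le_ofReal (by nlinarith)

theorem OmegaMain_two (δ : ℝ) (p : ℝ≥0∞) :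
    OmegaMain 2 f δ (jacobi 0 0) p = ⨆ h ∈ Ioc 0 δ,
      LpOn (fun x => symmDelta 2 (h * phiW x) f x) p (-(1 - 8 * h ^ 2)) (1 - 8 * h ^ 2) := by
  have hl : ∀ h : ℝ, -1 + 2 * ((2 : ℕ) : ℝ) ^ 2 * h ^ 2 = -(1 - 8 * h ^ 2) := fun h => by
    push_cast; ring
  have hr : ∀ h : ℝ, 1 - 2 * ((2 : ℕ) : ℝ) ^ 2 * h ^ 2 = 1 - 8 * h ^ 2 := fun h => by
    push_cast; ring
  simp only [OmegaMain, jacobi_zero_zero, one_mul, hl, hr]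

theorem OmegaMain_two_one_le (hconv : ConvexOn ℝ (Ioo (-1) 1) f)
    (hM : ∀ x ∈ Ioo (-1 : ℝ) 1, |f x| ≤ M) (δ : ℝ) :
    OmegaMain 2 f δ (jacobi 0 0) 1 ≤ ENNReal.ofReal (44 * M * δ ^ 2) := by
  have hM0 : 0 ≤ M := (abs_nonneg _).trans (hM 0 (by norm_num))
  rw [OmegaMain_two]
  refine iSup₂_le fun h hh => ?_
  rcases lt_or_ge (1 - 8 * h ^ 2) 0 with ha | ha
  · rw [LpOn, Icc_eq_empty (by linarith), Measure.restrict_empty, eLpNorm_measure_zero]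
    exact zero_le
  · refine (LpOn_symmDelta_two_le hconv hM hh.1 ha).trans (ENNReal.ofReal_le_ofReal ?_)
    have := hh.1.le
    gcongr
    exact hh.2

theorem omegaDT_two_one_le (hconv : ConvexOn ℝ (Ioo (-1) 1) f)
    (hM : ∀ x ∈ Ioo (-1 : ℝ) 1, |f x| ≤ M) (δ : ℝ) :
    omegaDT 2 f δ (jacobi 0 0) 1 ≤ ENNReal.ofReal (108 * M * δ ^ 2) := by
  have hM0 : 0 ≤ M := (abs_nonneg _).trans (hM 0 (by norm_num))
  refine (add_le_add (add_le_add (OmegaMain_two_one_le hconv hM δ) (OmegaFwd_one_le hM 2 δ))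
    (OmegaBwd_one_le hM 2 δ)).trans_eq ?_
  rw [← ENNReal.ofReal_add (by positivity) (by positivity),
    ← ENNReal.ofReal_add (by positivity) (by positivity)]
  congr 1
  push_cast
  ring

end MainPart

section LowerBound

theorem sq_sub_one_mem_BSet_top : (fun x : ℝ => x ^ 2 - 1) ∈ BSet ∞ 0 0 := by
  refine mem_BSet_top_zero_iff.mpr ⟨by fun_prop, le_antisymm ?_ ?_⟩
  · refine eLpNormEssSup_le_of_ae_enorm_bound ?_
    filter_upwards [ae_restrict_mem measurableSet_Icc] with x hx
    rw [Real.enorm_eq_ofReal_abs, ENNReal.ofReal_le_one, abs_le]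
    constructor <;> nlinarith [hx.1, hx.2]
  · have h0 : ‖(0 : ℝ) ^ 2 - 1‖ₑ = 1 := by norm_num
    exact h0.symm.trans_le (enorm_le_LpOn_top (f := fun x => x ^ 2 - 1) (by fun_prop) (by norm_num))

theorem sq_sub_one_mem_MSet_two : (fun x : ℝ => x ^ 2 - 1) ∈ MSet 2 := by
  have hsq : ConvexOn ℝ (Ioo (-1) 1) fun x : ℝ => x ^ 2 :=
    even_two.convexOn_pow.subset (subset_univ _) (convex_Ioo _ _)
  exact kMonotoneOn_two_of_convexOn (hsq.sub (concaveOn_const 1 (convex_Ioo _ _)))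

theorem symmDelta_two_sq_sub_one {h x : ℝ} (hh : 0 ≤ h) (hx : |x| ≤ 1 - 8 * h ^ 2) :
    symmDelta 2 (h * phiW x) (fun x => x ^ 2 - 1) x = 2 * h ^ 2 * (1 - x ^ 2) := by
  have hh2 : 0 ≤ h ^ 2 := sq_nonneg h
  have hsub : Icc (-(1 - 4 * h ^ 2)) (1 - 4 * h ^ 2) ⊆ Icc (-1) 1 :=
    Icc_subset_Icc (by linarith) (by linarith)
  obtain ⟨hl, hr⟩ := sub_add_mul_phiW_mem_Icc hh hx
  rw [symmDelta_two (hsub hl) (hsub hr), ← phiW_sq (by linarith : |x| ≤ 1)]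
  ring

theorem ofReal_sq_le_omegaDT_sq_sub_one {δ : ℝ} (hδ : 0 < δ) (hδ4 : δ ≤ 1 / 4) :
    ENNReal.ofReal (δ ^ 2) ≤ omegaDT 2 (fun x => x ^ 2 - 1) δ (jacobi 0 0) 1 := by
  have hδ2 : δ ^ 2 ≤ 1 / 16 := by nlinarith
  have hpoint : ∀ x ∈ Icc (-(1 / 2) : ℝ) (1 / 2),
      ENNReal.ofReal (δ ^ 2) ≤ ‖symmDelta 2 (δ * phiW x) (fun x => x ^ 2 - 1) x‖ₑ := by
    intro x hx
    have hx2 : x ^ 2 ≤ 1 / 4 := by nlinarith [hx.1, hx.2]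
    rw [symmDelta_two_sq_sub_one hδ.le ((abs_le.mpr hx).trans (by linarith)),
      Real.enorm_eq_ofReal_abs]
    exact ENNReal.ofReal_le_ofReal (le_abs.mpr (.inl (by nlinarith [sq_nonneg δ])))
  calc ENNReal.ofReal (δ ^ 2)
      = ∫⁻ _ in Icc (-(1 / 2) : ℝ) (1 / 2), ENNReal.ofReal (δ ^ 2) := by
        rw [setLIntegral_const, Real.volume_Icc]
        norm_num
    _ ≤ ∫⁻ x in Icc (-(1 / 2) : ℝ) (1 / 2), ‖symmDelta 2 (δ * phiW x) (fun x => x ^ 2 - 1) x‖ₑ :=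
        setLIntegral_mono' measurableSet_Icc hpoint
    _ ≤ LpOn (fun x => symmDelta 2 (δ * phiW x) (fun x => x ^ 2 - 1) x) 1
          (-(1 - 8 * δ ^ 2)) (1 - 8 * δ ^ 2) := by
        rw [LpOn, eLpNorm_one_eq_lintegral_enorm]
        exact lintegral_mono_set (Icc_subset_Icc (by linarith) (by linarith))
    _ ≤ OmegaMain 2 (fun x => x ^ 2 - 1) δ (jacobi 0 0) 1 := by
        rw [OmegaMain_two]
        exact le_iSup₂_of_le δ ⟨hδ, le_rfl⟩ le_rfl
    _ ≤ omegaDT 2 (fun x => x ^ 2 - 1) δ (jacobi 0 0) 1 := le_self_add.trans le_self_add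

end LowerBound

theorem statement2 :
    ∃ c₁ > (0 : ℝ), ∃ c₂ > (0 : ℝ), ∀ δ : ℝ, 0 < δ → δ < 1 / 4 →
      ENNReal.ofReal (c₁ * δ ^ 2) ≤
        (⨆ f ∈ BSet ∞ 0 0 ∩ MSet 2, omegaDT 2 f δ (jacobi 0 0) 1) ∧
      (⨆ f ∈ BSet ∞ 0 0 ∩ MSet 2, omegaDT 2 f δ (jacobi 0 0) 1) ≤
        ENNReal.ofReal (c₂ * δ ^ 2) := by
  refine ⟨1, one_pos, 108, by norm_num, fun δ hδ hδ4 => ⟨?_, iSup₂_le fun f hf => ?_⟩⟩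
  · rw [one_mul]
    exact le_iSup₂_of_le _ ⟨sq_sub_one_mem_BSet_top, sq_sub_one_mem_MSet_two⟩
      (ofReal_sq_le_omegaDT_sq_sub_one hδ hδ4.le)
  · have hconv : ConvexOn ℝ (Ioo (-1) 1) f := convexOn_of_kMonotoneOn_two hf.2
    have hbound : ∀ x ∈ Ioo (-1 : ℝ) 1, |f x| ≤ 1 :=
      abs_le_one_of_mem_BSet_top hf.1 (hconv.continuousOn isOpen_Ioo)
    simpa only [mul_one] using omegaDT_two_one_le hconv hbound δ
end
end
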